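/- arXiv:math/0411009 — 2 statements merged into one kernel-verified Lean document; each statement's English description precedes it below -/
import Mathlib

section
/- Every finite simple graph with no K_6 minor (in particular, every linklessly embeddable graph) is generically 4-stress free. -/
open scoped Classical

/-- `H` is a minor of `G`: there is a family of pairwise disjoint nonempty connected
"branch sets" in `G`, one for each vertex of `H`, such that every edge of `H` is
realized by an edge of `G` between the corresponding branch sets. -/
def HasMinor {V W : Type*} (G : SimpleGraph V) (H : SimpleGraph W) : Prop :=
  ∃ B : W → Set V,
    (∀ i, (B i).Nonempty) ∧
    (∀ i j, i ≠ j → Disjoint (B i) (B j)) ∧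
    (∀ i, (G.induce (B i)).Connected) ∧
    (∀ i j, H.Adj i j → ∃ x ∈ B i, ∃ y ∈ B j, G.Adj x y)

/-- `w : E(G) → ℝ` is a stress of the embedding `f : V → ℝ^d`. -/
noncomputable def IsStress {V : Type*} [Fintype V] (G : SimpleGraph V) (d : ℕ)
    (f : V → EuclideanSpace ℝ (Fin d)) (w : G.edgeSet → ℝ) : Prop :=
  ∀ v : V,
    (∑ u : V, if h : G.Adj v u then w ⟨s(v, u), G.mem_edgeSet.mpr h⟩ • (f v - f u) else 0) = 0

/-- The set of `d`-embeddings of `G` whose only stress is the zero function. -/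
def StressFreeEmbeddings {V : Type*} [Fintype V] (G : SimpleGraph V) (d : ℕ) :
    Set (V → EuclideanSpace ℝ (Fin d)) :=
  {f | ∀ w : G.edgeSet → ℝ, IsStress G d f w → w = 0}

/-- `G` is generically `d`-stress free: the set of `d`-embeddings with no nonzero
stress is open and dense in the space of all `d`-embeddings. -/
def GenericallyStressFree {V : Type*} [Fintype V] (G : SimpleGraph V) (d : ℕ) : Prop :=
  IsOpen (StressFreeEmbeddings G d) ∧ Dense (StressFreeEmbeddings G d)

/-! Stress-free embeddings form an open set, which is dense as soon as it is nonempty, so it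
suffices to find one. Consider a minor-minimal counterexample. Splitting a vertex preserves the
existence of a stress-free embedding in dimension four when the two new vertices have at most three
common neighbours: put them at the same point, give their edge a generic limiting direction, and
perturb. Hence every edge lies in at least four triangles.

A graph on `n ≥ 1` vertices with a stress-free embedding in dimension four has at most `4 (n - 1)`
edges, because the forces exerted by any edge weights sum to zero. Applied to proper subgraphs, this
replaces Mader's bound on the number of edges of a graph without a `K₆` minor.

Take a minimal nonempty set `C` of non-isolated vertices whose boundary is a clique of at most three
vertices. Counting edges, a vertex `v` of minimum degree in `C` has degree at most seven. For any
two nonadjacent neighbours `a`, `a'` of `v`, the remaining neighbours of `v` contain a `K₃` minor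
joined to both. A component of the graph minus the closed neighbourhood of `v` that is adjacent to
`a` and to `a'` would supply the missing connection and complete a `K₆` minor together with `v`, so
the boundary of each such component is a clique. By minimality of `C`, a single component contains
every vertex of `C` and of its boundary that is neither `v` nor adjacent to `v`. As `v` has minimum
degree, this component is adjacent to every neighbour of `v` in a nonadjacent pair, so no such pair
exists; but then the neighbours of `v` are a clique, which again yields a `K₆` minor. -/

section LinearFamilies

open Function Module

lemma finite_setOf_not_injective_add_smul {K A B : Type*} [Field K] [AddCommGroup A] [Module K A]
    [FiniteDimensional K A] [AddCommGroup B] [Module K B] (S T : A →ₗ[K] B) (hT : Injective T) :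
    {t : K | ¬ Injective (S + t • T)}.Finite := by
  obtain ⟨L, hL⟩ := T.exists_leftInverse_of_injective (LinearMap.ker_eq_bot.mpr hT)
  refine (End.finite_spectrum (-(L ∘ₗ S))).subset fun t ht hunit => ht ?_
  have hcomp : L ∘ₗ (S + t • T) = algebraMap K (End K A) t - -(L ∘ₗ S) := by
    rw [LinearMap.comp_add, LinearMap.comp_smul, hL, sub_neg_eq_add, add_comm]
    rfl
  have hinj : Injective (L ∘ₗ (S + t • T)) := by
    rw [hcomp]
    exact ((End.isUnit_iff _).mp hunit).injective
  exact Injective.of_comp (f := L) hinj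

lemma dense_setOf_injective {F A B : Type*} [AddCommGroup F] [Module ℝ F] [TopologicalSpace F]
    [ContinuousAdd F] [ContinuousSMul ℝ F] [AddCommGroup A] [Module ℝ A] [FiniteDimensional ℝ A]
    [AddCommGroup B] [Module ℝ B] (R : F →ₗ[ℝ] A →ₗ[ℝ] B) (h : ∃ f, Injective (R f)) :
    Dense {f | Injective (R f)} := by
  obtain ⟨f₀, hf₀⟩ := h
  intro f
  have hdense : Dense {t : ℝ | Injective (R f + t • R f₀)} := by
    simpa only [Set.compl_ofPred, not_not] using
      (finite_setOf_not_injective_add_smul (R f) (R f₀) hf₀).countable.dense_compl ℝ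
  have hcont : Continuous fun t : ℝ => f + t • f₀ := by fun_prop
  have := map_mem_closure hcont (hdense 0) (t := {f | Injective (R f)}) fun t ht => by
    simpa only [Set.mem_ofPred_eq, map_add, map_smul] using ht
  simpa only [zero_smul, add_zero] using this

lemma isOpen_setOf_injective {F A B : Type*} [NormedAddCommGroup F] [NormedSpace ℝ F]
    [FiniteDimensional ℝ F] [NormedAddCommGroup A] [NormedSpace ℝ A] [FiniteDimensional ℝ A]
    [NormedAddCommGroup B] [NormedSpace ℝ B] (R : F →ₗ[ℝ] A →ₗ[ℝ] B) :
    IsOpen {f | Injective (R f)} := by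
  have hcont : Continuous (LinearMap.toContinuousLinearMap.toLinearMap ∘ₗ R) :=
    LinearMap.continuous_of_finiteDimensional _
  exact (ContinuousLinearMap.isOpen_injective (𝕜 := ℝ) (E := A) (F := B)).preimage hcont

lemma exists_notMem_span_image {K A ι : Type*} [DivisionRing K] [AddCommGroup A] [Module K A]
    {S : Finset ι} (hS : S.card < finrank K A) (g : ι → A) :
    ∃ z, z ∉ Submodule.span K (g '' S) := by
  by_contra! hspan
  have hcard := (finrank_span_finset_le_card (R := K) (S.image g)).trans Finset.card_image_le
  rw [Set.finrank, Finset.coe_image, Submodule.eq_top_iff'.mpr hspan, finrank_top] at hcard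
  omega

end LinearFamilies

section Stresses

open Function Module

variable {V W E : Type*}

/-- Edge weights of `G`, encoded as symmetric functions of two vertices that vanish off the
edges; the candidates for stresses. -/
def edgeWeights (G : SimpleGraph V) : Submodule ℝ (V → V → ℝ) where
  carrier := {ω | (∀ x y, ω x y = ω y x) ∧ ∀ x y, ¬ G.Adj x y → ω x y = 0}
  add_mem' := by
    rintro ω η ⟨hω, hω'⟩ ⟨hη, hη'⟩
    exact ⟨fun x y => by simp [hω x y, hη x y], fun x y h => by simp [hω' x y h, hη' x y h]⟩
  zero_mem' := by simp
  smul_mem' := by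
    rintro c ω ⟨hω, hω'⟩
    exact ⟨fun x y => by simp [hω x y], fun x y h => by simp [hω' x y h]⟩

/-- The identification of functions on the edge set with elements of `edgeWeights G`. -/
noncomputable def edgeWeightsEquiv (G : SimpleGraph V) : (G.edgeSet → ℝ) ≃ₗ[ℝ] edgeWeights G where
  toFun w := ⟨fun x y => if h : G.Adj x y then w ⟨s(x, y), G.mem_edgeSet.mpr h⟩ else 0,
    fun x y => by simp only [G.adj_comm x y, Sym2.eq_swap], fun x y h => dif_neg h⟩
  map_add' w w' := by ext x y; by_cases h : G.Adj x y <;> simp [h]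
  map_smul' c w := by ext x y; by_cases h : G.Adj x y <;> simp [h]
  invFun ω e := Sym2.lift ⟨ω.1, ω.2.1⟩ e.1
  left_inv w := by
    funext ⟨e, he⟩
    induction e with
    | h x y => exact dif_pos (G.mem_edgeSet.mp he)
  right_inv ω := by
    ext x y
    by_cases h : G.Adj x y <;> simp [h, ω.2.2 x y]

lemma finrank_edgeWeights [Fintype V] (G : SimpleGraph V) :
    finrank ℝ (edgeWeights G) = G.edgeFinset.card := by
  rw [← (edgeWeightsEquiv G).finrank_eq, finrank_fintype_fun_eq_card, SimpleGraph.edgeFinset_card]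

lemma sum_sum_eq_zero_of_antisymm {M : Type*} [AddCommGroup M] [IsAddTorsionFree M]
    {s : Finset V} {h : V → V → M} (hanti : ∀ x y, h x y = -h y x) :
    ∑ x ∈ s, ∑ y ∈ s, h x y = 0 := by
  rw [← self_eq_neg, ← Finset.sum_neg_distrib, Finset.sum_comm]
  simp_rw [← Finset.sum_neg_distrib, ← hanti]

variable [Fintype V] [Fintype W]

section Module

variable [AddCommGroup E] [Module ℝ E]

/-- The total force at each vertex when the edges at `x` point in the directions `g x y` and
carry the weights `ω x y`. The directions are kept independent of an embedding, so that an edge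
of length zero may still be given a direction. -/
noncomputable def forceMap (G : SimpleGraph V) :
    (V → V → E) →ₗ[ℝ] edgeWeights G →ₗ[ℝ] (V → E) :=
  LinearMap.mk₂ ℝ (fun g ω x => ∑ y, ω.1 x y • g x y)
    (fun g g' ω => by ext x; simp [Finset.sum_add_distrib])
    (fun c g ω => by ext x; simp [Finset.smul_sum, smul_comm c])
    (fun g ω ω' => by ext x; simp [Finset.sum_add_distrib, add_smul])
    (fun c g ω => by ext x; simp [Finset.smul_sum, smul_smul])

lemma forceMap_apply (G : SimpleGraph V) (g : V → V → E) (ω : edgeWeights G) (x : V) :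
    forceMap G g ω x = ∑ y, ω.1 x y • g x y :=
  rfl

lemma injective_forceMap_iff {G : SimpleGraph V} {g : V → V → E} :
    Injective (forceMap G g) ↔
      ∀ ω ∈ edgeWeights G, (∀ x, ∑ y, ω x y • g x y = 0) → ω = 0 := by
  rw [injective_iff_map_eq_zero, Subtype.forall]
  refine forall₂_congr fun ω hω => ?_
  rw [Submodule.mk_eq_zero, funext_iff]
  rfl

/-- The edge directions determined by an embedding. -/
def edgeVectors : (V → E) →ₗ[ℝ] (V → V → E) where
  toFun f x y := f x - f y
  map_add' f f' := by ext x y; simp [add_sub_add_comm]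
  map_smul' c f := by ext x y; simp [smul_sub]

/-- The embedding `f` of `G` has no nonzero stress. -/
def StressFree (G : SimpleGraph V) (f : V → E) : Prop :=
  Injective (forceMap G (edgeVectors f))

lemma stressFree_iff {G : SimpleGraph V} {f : V → E} :
    StressFree G f ↔ ∀ ω ∈ edgeWeights G, (∀ x, ∑ y, ω x y • (f x - f y) = 0) → ω = 0 :=
  injective_forceMap_iff

lemma mem_stressFreeEmbeddings_iff (G : SimpleGraph V) (d : ℕ)
    (f : V → EuclideanSpace ℝ (Fin d)) : f ∈ StressFreeEmbeddings G d ↔ StressFree G f := by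
  rw [StressFree, injective_iff_map_eq_zero, ← (edgeWeightsEquiv G).forall_congr_right]
  refine forall_congr' fun w => imp_congr ?_ (edgeWeightsEquiv G).map_eq_zero_iff.symm
  rw [funext_iff]
  refine forall_congr' fun x => ?_
  rw [forceMap_apply, Pi.zero_apply]
  refine Eq.congr_left (Finset.sum_congr rfl fun y _ => ?_)
  by_cases h : G.Adj x y <;> simp [h, edgeWeightsEquiv, edgeVectors]

lemma StressFree.card_edgeFinset_add_finrank_le [FiniteDimensional ℝ E] [Nonempty V]
    {G : SimpleGraph V} {f : V → E} (hf : StressFree G f) :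
    G.edgeFinset.card + finrank ℝ E ≤ finrank ℝ E * Fintype.card V := by
  have : IsAddTorsionFree E := .of_isTorsionFree ℝ E
  let total : (V → E) →ₗ[ℝ] E := ∑ x, LinearMap.proj x
  have htotal : Surjective total := fun z =>
    ⟨Pi.single (Classical.arbitrary V) z, by simp [total, Finset.sum_pi_single']⟩
  have hrange : LinearMap.range (forceMap G (edgeVectors f)) ≤ LinearMap.ker total := by
    rintro _ ⟨ω, rfl⟩
    simp only [total, LinearMap.mem_ker, LinearMap.sum_apply, LinearMap.proj_apply, forceMap_apply]
    refine sum_sum_eq_zero_of_antisymm fun x y => ?_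
    rw [ω.2.1 x y, ← smul_neg]
    exact congrArg _ (neg_sub _ _).symm
  have hker := LinearMap.finrank_range_add_finrank_ker total
  rw [LinearMap.range_eq_top.mpr htotal, finrank_top, finrank_pi_fintype, Finset.sum_const,
    Finset.card_univ, smul_eq_mul, mul_comm] at hker
  have := Submodule.finrank_mono hrange
  rw [LinearMap.finrank_range_of_inj hf, finrank_edgeWeights] at this
  omega

lemma injective_forceMap_smul {G : SimpleGraph V} {g : V → V → E} {c : V → V → ℝ}
    (hsymm : ∀ x y, c x y = c y x) (hc : ∀ x y, c x y ≠ 0) (hg : Injective (forceMap G g)) :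
    Injective (forceMap G fun x y => c x y • g x y) := by
  rw [injective_forceMap_iff] at hg ⊢
  intro ω hω hforce
  have hcω : (fun x y => ω x y * c x y) = 0 := by
    refine hg _ ⟨fun x y => ?_, fun x y h => ?_⟩ fun x => ?_
    · exact congrArg₂ _ (hω.1 x y) (hsymm x y)
    · exact mul_eq_zero_of_left (hω.2 x y h) _
    · simpa only [smul_smul] using hforce x
  ext x y
  exact (mul_eq_zero.mp (congrFun₂ hcω x y)).resolve_right (hc x y)

lemma sum_fibers_eq_zero_of_stressFree_map {G : SimpleGraph V} {π : V → W} {f : W → E}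
    (hf : StressFree (G.map π) f) {g : V → V → E} (hanti : ∀ x y, g x y = -g y x)
    (hg : ∀ x y, π x ≠ π y → g x y = f (π x) - f (π y)) {ω : V → V → ℝ}
    (hω : ω ∈ edgeWeights G) (hforce : ∀ x, ∑ y, ω x y • g x y = 0) {a b : W} (hab : a ≠ b) :
    ∑ x with π x = a, ∑ y with π y = b, ω x y = 0 := by
  have : IsAddTorsionFree E := .of_isTorsionFree ℝ E
  let η : W → W → ℝ := fun a b =>
    if a = b then 0 else ∑ x with π x = a, ∑ y with π y = b, ω x y
  have hη : η ∈ edgeWeights (G.map π) := by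
    refine ⟨fun a b => ?_, fun a b hnadj => ?_⟩
    · simp only [η, eq_comm (a := a)]
      rw [Finset.sum_comm]
      simp_rw [fun x y => hω.1 x y]
    · refine ite_eq_left_iff.mpr fun hne => Finset.sum_eq_zero fun x hx =>
        Finset.sum_eq_zero fun y hy => hω.2 x y fun hadj => hnadj ?_
      exact ⟨hne, x, y, hadj, (Finset.mem_filter.mp hx).2, (Finset.mem_filter.mp hy).2⟩
  have hterm (a b : W) : η a b • (f a - f b) =
      ∑ x with π x = a, ∑ y with π y = b, ω x y • g x y := by
    by_cases h : a = b
    · subst h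
      rw [sub_self, smul_zero, sum_sum_eq_zero_of_antisymm fun x y => ?_]
      rw [hω.1 x y, hanti x y, smul_neg]
    · simp only [η, if_neg h, Finset.sum_smul]
      refine Finset.sum_congr rfl fun x hx => Finset.sum_congr rfl fun y hy => ?_
      obtain rfl := (Finset.mem_filter.mp hx).2
      obtain rfl := (Finset.mem_filter.mp hy).2
      rw [hg x y h]
  have hzero : η = 0 := stressFree_iff.mp hf η hη fun a => by
    simp_rw [hterm]
    rw [Finset.sum_comm]
    exact Finset.sum_eq_zero fun x _ => (Finset.sum_fiberwise _ _ _).trans (hforce x)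
  exact (if_neg hab).symm.trans (congrFun₂ hzero a b)

lemma weights_of_stressFree_map {G : SimpleGraph V} {u v : V} (huv : u ≠ v) {π : V → W}
    (hπ : ∀ x y, π x = π y ↔ x = y ∨ s(x, y) = s(u, v)) {f : W → E}
    (hf : StressFree (G.map π) f) {g : V → V → E} (hanti : ∀ x y, g x y = -g y x)
    (hg : ∀ x y, π x ≠ π y → g x y = f (π x) - f (π y)) {ω : V → V → ℝ}
    (hω : ω ∈ edgeWeights G) (hforce : ∀ x, ∑ y, ω x y • g x y = 0) {y : V} (hyu : y ≠ u)
    (hyv : y ≠ v) : ω u y + ω v y = 0 ∧ ∀ x, x ≠ u → x ≠ v → ω x y = 0 := by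
  have hfiber {x : V} (hxu : x ≠ u) (hxv : x ≠ v) : ({z | π z = π x} : Finset V) = {x} := by
    ext z
    simp [hπ, hxu, hxv]
  have hfiber_u : ({z | π z = π u} : Finset V) = {u, v} := by
    ext z
    simp [hπ, huv]
  have hsum {x : V} (hxy : π x ≠ π y) : ∑ z with π z = π x, ω z y = 0 := by
    have := sum_fibers_eq_zero_of_stressFree_map hf hanti hg hω hforce hxy
    simpa only [hfiber hyu hyv, Finset.sum_singleton] using this
  refine ⟨?_, fun x hxu hxv => ?_⟩
  · have := hsum (x := u) (by simp [hπ, huv, hyv, hyu.symm])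
    rwa [hfiber_u, Finset.sum_pair huv] at this
  · by_cases hxy : x = y
    · exact hω.2 x y fun h => h.ne hxy
    · have := hsum (x := x) (by simp [hπ, hxy, hxu, hxv])
      rwa [hfiber hxu hxv, Finset.sum_singleton] at this

lemma injective_forceMap_of_stressFree_map {G : SimpleGraph V} {u v : V} (huv : u ≠ v) {π : V → W}
    (hπ : ∀ x y, π x = π y ↔ x = y ∨ s(x, y) = s(u, v)) {f : W → E}
    (hf : StressFree (G.map π) f) {g : V → V → E} (hanti : ∀ x y, g x y = -g y x)
    (hg : ∀ x y, π x ≠ π y → g x y = f (π x) - f (π y))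
    (hind : LinearIndepOn ℝ (g v) (insert u (G.neighborFinset u ∩ G.neighborFinset v) : Finset V)) :
    Injective (forceMap G g) := by
  refine injective_forceMap_iff.mpr fun ω hω hforce => ?_
  have hrel {y : V} := weights_of_stressFree_map huv hπ hf hanti hg hω hforce (y := y)
  have hv_supp (y : V) (hy : y ∉ insert u (G.neighborFinset u ∩ G.neighborFinset v)) :
      ω v y = 0 := by
    by_cases hvy : G.Adj v y
    · simp only [Finset.mem_insert, Finset.mem_inter, SimpleGraph.mem_neighborFinset, hvy, and_true,
        not_or] at hy
      simpa [hω.2 u y hy.2] using (hrel hy.1 hvy.ne').1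
    · exact hω.2 v y hvy
  have hv (y : V) : ω v y = 0 := by
    by_cases hy : y ∈ insert u (G.neighborFinset u ∩ G.neighborFinset v)
    · refine linearIndepOn_finset_iff.mp hind (ω v) ?_ y hy
      rw [← hforce v]
      exact Finset.sum_subset (Finset.subset_univ _) fun z _ hz => by rw [hv_supp z hz, zero_smul]
    · exact hv_supp y hy
  have hu (y : V) : ω u y = 0 := by
    by_cases hyu : y = u
    · exact hω.2 u y fun h => h.ne' hyu
    by_cases hyv : y = v
    · rw [hyv, hω.1, hv]
    · simpa [hv y] using (hrel hyu hyv).1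
  ext x y
  by_cases hxu : x = u
  · rw [hxu]; exact hu y
  by_cases hxv : x = v
  · rw [hxv]; exact hv y
  by_cases hyu : y = u
  · rw [hyu, hω.1]; exact hu x
  by_cases hyv : y = v
  · rw [hyv, hω.1]; exact hv x
  exact (hrel hyu hyv).2 x hxu hxv

end Module

variable [NormedAddCommGroup E] [NormedSpace ℝ E]

lemma dense_setOf_stressFree {G : SimpleGraph V} (h : ∃ f : V → E, StressFree G f) :
    Dense {f : V → E | StressFree G f} :=
  dense_setOf_injective ((forceMap G).comp (edgeVectors (E := E))) h

variable [FiniteDimensional ℝ E]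

lemma isOpen_setOf_stressFree (G : SimpleGraph V) : IsOpen {f : V → E | StressFree G f} :=
  isOpen_setOf_injective ((forceMap G).comp (edgeVectors (E := E)))

lemma genericallyStressFree_of_exists {G : SimpleGraph V} {d : ℕ}
    (h : ∃ f : V → EuclideanSpace ℝ (Fin d), StressFree G f) : GenericallyStressFree G d := by
  have heq : StressFreeEmbeddings G d = {f | StressFree G f} :=
    Set.ext (mem_stressFreeEmbeddings_iff G d)
  rw [GenericallyStressFree, heq]
  exact ⟨isOpen_setOf_stressFree G, dense_setOf_stressFree h⟩

lemma dense_setOf_linearIndepOn_sub {ι : Type*} {i : ι} {S : Finset ι} (hi : i ∉ S)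
    (hS : S.card ≤ finrank ℝ E) : Dense {f : ι → E | LinearIndepOn ℝ (fun a => f i - f a) S} := by
  let D : (ι → E) →ₗ[ℝ] (S → E) :=
    LinearMap.funLeft ℝ E (Subtype.val : S → ι) ∘ₗ LinearMap.proj i ∘ₗ edgeVectors
  have hD (f : ι → E) (a : S) : D f a = f i - f a := rfl
  have heq : {f : ι → E | LinearIndepOn ℝ (fun a => f i - f a) S} =
      {f | Injective ((Fintype.bilinearCombination ℝ ℝ ∘ₗ D) f)} :=
    Set.ext fun f => linearIndependent_iff_injective_fintypeLinearCombination
  rw [heq]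
  refine dense_setOf_injective _ ?_
  obtain ⟨e⟩ : Nonempty (S ↪ Fin (finrank ℝ E)) :=
    Embedding.nonempty_of_card_le (by simpa using hS)
  refine ⟨fun a => if ha : a ∈ S then -finBasis ℝ E (e ⟨a, ha⟩) else 0, ?_⟩
  refine linearIndependent_iff_injective_fintypeLinearCombination.mp ?_
  convert (finBasis ℝ E).linearIndependent.comp e e.injective using 1
  funext a
  simp [hD, hi]

lemma exists_stressFree_linearIndepOn_sub {H : SimpleGraph W} (h : ∃ f : W → E, StressFree H f)
    {w : W} {S : Finset W} (hw : w ∉ S) (hS : S.card ≤ finrank ℝ E) :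
    ∃ f : W → E, StressFree H f ∧ LinearIndepOn ℝ (fun a => f w - f a) S :=
  ((dense_setOf_stressFree h).inter_of_isOpen_left (dense_setOf_linearIndepOn_sub hw hS)
    (isOpen_setOf_stressFree H)).nonempty

/-- The edge directions of the embedding `f + t • ζ`, except that the edge `uv` points along `ζ`.
When `f u = f v` this is a rescaling for `t ≠ 0`, and at `t = 0` the edge `uv`, collapsed by `f`,
keeps its limiting direction. -/
noncomputable def rescaledEdgeVectors (u v : V) (f ζ : V → E) (t : ℝ) : V → V → E := fun x y =>
  if s(x, y) = s(u, v) then edgeVectors ζ x y else edgeVectors (f + t • ζ) x y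

lemma exists_stressFree_of_injective_rescaledEdgeVectors {G : SimpleGraph V} {u v : V}
    {f ζ : V → E} (huv : f u = f v)
    (h : Injective (forceMap G (rescaledEdgeVectors u v f ζ 0))) :
    ∃ f' : V → E, StressFree G f' := by
  have hcont : Continuous (rescaledEdgeVectors u v f ζ) := by
    refine continuous_pi fun x => continuous_pi fun y => ?_
    by_cases hxy : s(x, y) = s(u, v)
    · simpa only [rescaledEdgeVectors, if_pos hxy] using continuous_const
    · simp only [rescaledEdgeVectors, if_neg hxy, edgeVectors, LinearMap.coe_mk, AddHom.coe_mk]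
      fun_prop
  have hnhds := ((isOpen_setOf_injective (forceMap G)).preimage hcont).mem_nhds h
  obtain ⟨t, ht, ht0⟩ : ∃ t ∈ (rescaledEdgeVectors u v f ζ) ⁻¹' _, t ∈ ({0}ᶜ : Set ℝ) :=
    Filter.nonempty_of_mem (Filter.inter_mem (nhdsWithin_le_nhds hnhds) self_mem_nhdsWithin)
  refine ⟨f + t • ζ, ?_⟩
  have hsmul : Injective (forceMap G fun x y =>
      (if s(x, y) = s(u, v) then t else 1) • rescaledEdgeVectors u v f ζ t x y) :=
    injective_forceMap_smul (fun x y => by rw [Sym2.eq_swap])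
      (fun x y => by split_ifs; exacts [ht0, one_ne_zero]) ht
  rw [StressFree]
  convert hsmul using 3
  ext x y
  by_cases hxy : s(x, y) = s(u, v)
  · have hf : f x = f y := by
      rcases Sym2.eq_iff.mp hxy with ⟨rfl, rfl⟩ | ⟨rfl, rfl⟩
      exacts [huv, huv.symm]
    simp [rescaledEdgeVectors, edgeVectors, hxy, hf, smul_sub]
  · simp [rescaledEdgeVectors, hxy]

theorem exists_stressFree_of_map {G : SimpleGraph V} {u v : V} (huv : u ≠ v) {π : V → W}
    (hπ : ∀ x y, π x = π y ↔ x = y ∨ s(x, y) = s(u, v))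
    (hcommon : (G.neighborFinset u ∩ G.neighborFinset v).card < finrank ℝ E)
    (h : ∃ f : W → E, StressFree (G.map π) f) : ∃ f : V → E, StressFree G f := by
  set C := G.neighborFinset u ∩ G.neighborFinset v with hC
  have hmemC {y : V} : y ∈ C ↔ G.Adj u y ∧ G.Adj v y := by simp [hC]
  have hne {y : V} (hy : y ∈ C) : y ≠ u ∧ y ≠ v :=
    ⟨(hmemC.mp hy).1.ne', (hmemC.mp hy).2.ne'⟩
  have hπC : Set.InjOn π C := fun x hx y _ hxy =>
    ((hπ x y).mp hxy).resolve_right (by simp [hne hx])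
  have hvC : π v ∉ C.image π := fun hmem => by
    obtain ⟨y, hy, hyv⟩ := Finset.mem_image.mp hmem
    simpa [hne hy] using (hπ y v).mp hyv
  obtain ⟨f, hf, hind⟩ := exists_stressFree_linearIndepOn_sub h hvC
    (Finset.card_image_le.trans hcommon.le)
  obtain ⟨z, hz⟩ := exists_notMem_span_image hcommon fun y => f (π v) - f (π y)
  refine exists_stressFree_of_injective_rescaledEdgeVectors (f := f ∘ π) (u := u) (v := v)
    (ζ := Pi.single v z) (congrArg f ((hπ u v).mpr (Or.inr rfl))) ?_
  set g := rescaledEdgeVectors u v (f ∘ π) (Pi.single v z) 0 with hg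
  have hg_uv {x y : V} (hxy : s(x, y) ≠ s(u, v)) : g x y = f (π x) - f (π y) := by
    simp [hg, rescaledEdgeVectors, edgeVectors, hxy]
  have hgv : Set.EqOn (g v) (fun y => f (π v) - f (π y)) C := fun y hy =>
    hg_uv (by simp [hne hy])
  refine injective_forceMap_of_stressFree_map huv hπ hf (fun x y => ?_)
    (fun x y hxy => hg_uv fun hs => hxy ((hπ x y).mpr (Or.inr hs))) ?_
  · simp only [hg, rescaledEdgeVectors, Sym2.eq_swap (a := y)]
    split_ifs <;> exact (neg_sub _ _).symm
  · rw [Finset.coe_insert, linearIndepOn_insert fun hu => (hne hu).1 rfl,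
      linearIndepOn_congr hgv, hgv.image_eq]
    refine ⟨LinearIndepOn.comp_of_image (v := fun a => f (π v) - f a)
      (by rwa [← Finset.coe_image]) hπC, ?_⟩
    have hgvu : g v u = z := by
      simp [hg, rescaledEdgeVectors, edgeVectors, huv, Sym2.eq_swap]
    rwa [hgvu]

end Stresses

section Minors

variable {V W X : Type*}

lemma reachable_induce_mono {G : SimpleGraph V} {s t : Set V} (hst : s ⊆ t)
    (hs : (G.induce s).Preconnected) {x y : V} (hx : x ∈ s) (hy : y ∈ s) :
    (G.induce t).Reachable ⟨x, hst hx⟩ ⟨y, hst hy⟩ :=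
  (hs ⟨x, hx⟩ ⟨y, hy⟩).map (SimpleGraph.induceHomOfLE G hst).toHom

lemma connected_induce_biUnion {G : SimpleGraph V} {H : SimpleGraph W} {B : W → Set V} {T : Set W}
    (hB : ∀ i ∈ T, (G.induce (B i)).Connected)
    (hadj : ∀ i j, H.Adj i j → ∃ x ∈ B i, ∃ y ∈ B j, G.Adj x y) (hT : (H.induce T).Connected) :
    (G.induce (⋃ i ∈ T, B i)).Connected := by
  have hsub {i : W} (hi : i ∈ T) : B i ⊆ ⋃ i ∈ T, B i := Set.subset_biUnion_of_mem hi
  have hwalk (i j : T) (p : (H.induce T).Walk i j) (x y : V) (hx : x ∈ B i) (hy : y ∈ B j) :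
      (G.induce (⋃ i ∈ T, B i)).Reachable ⟨x, hsub i.2 hx⟩ ⟨y, hsub j.2 hy⟩ := by
    induction p generalizing x with
    | @nil i => exact reachable_induce_mono (hsub i.2) (hB i i.2).preconnected hx hy
    | @cons i k j hik _ ih =>
      obtain ⟨a, ha, b, hb, hab⟩ := hadj i k hik
      have hxa := reachable_induce_mono (hsub i.2) (hB i i.2).preconnected hx ha
      have hab' : (G.induce (⋃ i ∈ T, B i)).Adj ⟨a, hsub i.2 ha⟩ ⟨b, hsub k.2 hb⟩ := hab
      exact hxa.trans (hab'.reachable.trans (ih b hb hy))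
  obtain ⟨i₀⟩ := hT.nonempty
  obtain ⟨x₀⟩ := (hB i₀ i₀.2).nonempty
  refine (SimpleGraph.connected_iff_exists_forall_reachable _).mpr
    ⟨⟨x₀, hsub i₀.2 x₀.2⟩, fun ⟨y, hy⟩ => ?_⟩
  obtain ⟨j, hj, hyj⟩ := Set.mem_iUnion₂.mp hy
  obtain ⟨p⟩ := hT.preconnected i₀ ⟨j, hj⟩
  exact hwalk _ _ p x₀ y x₀.2 hyj

theorem HasMinor.trans {G : SimpleGraph V} {H : SimpleGraph W} {K : SimpleGraph X}
    (hGH : HasMinor G H) (hHK : HasMinor H K) : HasMinor G K := by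
  obtain ⟨B, -, hBdisj, hBconn, hBadj⟩ := hGH
  obtain ⟨C, -, hCdisj, hCconn, hCadj⟩ := hHK
  have hconn (k : X) : (G.induce (⋃ i ∈ C k, B i)).Connected :=
    connected_induce_biUnion (fun i _ => hBconn i) hBadj (hCconn k)
  refine ⟨fun k => ⋃ i ∈ C k, B i, fun k => Set.nonempty_coe_sort.mp (hconn k).nonempty,
    fun k l hkl => ?_, hconn, fun k l hkl => ?_⟩
  · simp only [Set.disjoint_iUnion_left, Set.disjoint_iUnion_right]
    intro j hj i hi
    exact hBdisj i j ((hCdisj k l hkl).ne_of_mem hi hj)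
  · obtain ⟨i, hi, j, hj, hij⟩ := hCadj k l hkl
    obtain ⟨x, hx, y, hy, hxy⟩ := hBadj i j hij
    exact ⟨x, Set.mem_biUnion hi hx, y, Set.mem_biUnion hj hy, hxy⟩

lemma hasMinor_of_isContained {G : SimpleGraph V} {H : SimpleGraph W} (h : H.IsContained G) :
    HasMinor G H := by
  obtain ⟨c⟩ := h
  refine ⟨fun i => {c i}, fun i => Set.singleton_nonempty _, fun i j hij => ?_,
    fun i => .of_subsingleton, fun i j hij => ⟨_, rfl, _, rfl, c.toHom.map_adj hij⟩⟩
  exact Set.disjoint_singleton.mpr (c.injective.ne hij)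

lemma not_hasMinor_of_isContained {G : SimpleGraph V} {H : SimpleGraph W} {K : SimpleGraph X}
    (h : H.IsContained G) (hG : ¬ HasMinor G K) : ¬ HasMinor H K :=
  fun hH => hG ((hasMinor_of_isContained h).trans hH)

lemma hasMinor_map {G : SimpleGraph V} {π : V → W}
    (hπ : ∀ w, (G.induce (π ⁻¹' {w})).Connected) : HasMinor G (G.map π) := by
  refine ⟨fun w => π ⁻¹' {w}, fun w => Set.nonempty_coe_sort.mp (hπ w).nonempty,
    fun w w' hww' => (Set.disjoint_singleton.mpr hww').preimage π, hπ, ?_⟩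
  rintro _ _ ⟨-, x, y, hxy, rfl, rfl⟩
  exact ⟨x, rfl, y, rfl, hxy⟩

lemma hasMinor_map_of_adj {G : SimpleGraph V} {u v : V} (huv : G.Adj u v) {π : V → W}
    (hsurj : Function.Surjective π)
    (hπ : ∀ x y, π x = π y ↔ x = y ∨ s(x, y) = s(u, v)) : HasMinor G (G.map π) := by
  refine hasMinor_map fun w => ?_
  obtain ⟨x, rfl⟩ := hsurj w
  by_cases hx : x ∈ ({u, v} : Set V)
  · have hfiber : π ⁻¹' {π x} = {u, v} := by
      ext y
      rcases hx with rfl | rfl <;> simp [hπ, huv.ne, huv.ne', or_comm]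
    rw [hfiber]
    exact SimpleGraph.induce_pair_connected_of_adj huv
  · have hfiber : π ⁻¹' {π x} = {x} := by
      ext y
      simp_all
    rw [hfiber]
    exact .of_subsingleton

/-- The relation required between two branch sets of a complete minor. -/
def BranchAdj (G : SimpleGraph V) (A B : Set V) : Prop :=
  Disjoint A B ∧ ∃ x ∈ A, ∃ y ∈ B, G.Adj x y

lemma BranchAdj.symm {G : SimpleGraph V} {A B : Set V} (h : BranchAdj G A B) :
    BranchAdj G B A := by
  obtain ⟨hdisj, x, hx, y, hy, hxy⟩ := h
  exact ⟨hdisj.symm, y, hy, x, hx, hxy.symm⟩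

lemma hasMinor_top_of_pairwise {G : SimpleGraph V} {n : ℕ} {L : List (Set V)} (hn : L.length = n)
    (hconn : ∀ A ∈ L, (G.induce A).Connected) (hL : L.Pairwise (BranchAdj G)) :
    HasMinor G (⊤ : SimpleGraph (Fin n)) := by
  subst hn
  have hbranch (i j : Fin L.length) (hij : i ≠ j) : BranchAdj G (L.get i) (L.get j) := by
    rw [List.pairwise_iff_get] at hL
    rcases lt_or_gt_of_ne hij with h | h
    exacts [hL i j h, (hL j i h).symm]
  exact ⟨L.get, fun i => Set.nonempty_coe_sort.mp (hconn _ (L.get_mem i)).nonempty,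
    fun i j hij => (hbranch i j hij).1, fun i => hconn _ (L.get_mem i),
    fun i j hij => (hbranch i j hij).2⟩

lemma hasMinor_top_of_isNClique {G : SimpleGraph V} {n : ℕ} {s : Finset V}
    (hs : G.IsNClique n s) : HasMinor G (⊤ : SimpleGraph (Fin n)) :=
  hasMinor_of_isContained
    ((SimpleGraph.not_cliqueFree_iff_top_isContained n).mp fun h => h s hs)

end Minors

section LinkTriangles

variable {V : Type*} {G : SimpleGraph V} {v a a' : V}

/-- A branch set inside `N(v) ∖ {a, a'}` joined to both `a` and `a'`. -/
structure IsLinkPart (G : SimpleGraph V) (v a a' : V) (P : Set V) : Prop where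
  subset : P ⊆ G.neighborSet v \ {a, a'}
  connected : (G.induce P).Connected
  left_adj : ∃ x ∈ P, G.Adj a x
  right_adj : ∃ x ∈ P, G.Adj a' x

lemma isLinkPart_singleton {s : V} (hv : G.Adj v s) (ha : G.Adj a s) (ha' : G.Adj a' s) :
    IsLinkPart G v a a' {s} where
  subset := by
    rintro x rfl
    exact ⟨hv, by simp [ha.ne', ha'.ne']⟩
  connected := .of_subsingleton
  left_adj := ⟨s, rfl, ha⟩
  right_adj := ⟨s, rfl, ha'⟩

/-- Three pairwise adjacent link parts: a `K₃` minor in `N(v) ∖ {a, a'}` whose branch sets are all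
joined to `a` and `a'`. -/
def HasLinkTriangle (G : SimpleGraph V) (v a a' : V) : Prop :=
  ∃ P Q R, IsLinkPart G v a a' P ∧ IsLinkPart G v a a' Q ∧ IsLinkPart G v a a' R ∧
    BranchAdj G P Q ∧ BranchAdj G P R ∧ BranchAdj G Q R

variable [Fintype V]

/-- Every edge of `G` lies in at least `k` triangles. -/
def EdgesInTriangles (G : SimpleGraph V) (k : ℕ) : Prop :=
  ∀ ⦃x y : V⦄, G.Adj x y → k ≤ (G.neighborFinset x ∩ G.neighborFinset y).card

lemma EdgesInTriangles.card_add_le_degree {k : ℕ} (hG : EdgesInTriangles G k) {x : V}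
    (hx : G.Adj v x) {T : Finset V} (hT : ∀ y ∈ T, G.Adj v y ∧ ¬ G.Adj x y) :
    T.card + k ≤ G.degree v := by
  have hdisj : Disjoint T (G.neighborFinset v ∩ G.neighborFinset x) :=
    Finset.disjoint_left.mpr fun y hy hy' =>
      (hT y hy).2 ((G.mem_neighborFinset x y).mp (Finset.mem_inter.mp hy').2)
  have hsub : T ∪ G.neighborFinset v ∩ G.neighborFinset x ⊆ G.neighborFinset v :=
    Finset.union_subset (fun y hy => (G.mem_neighborFinset v y).mpr (hT y hy).1)
      Finset.inter_subset_left
  have := Finset.card_le_card hsub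
  rw [Finset.card_union_of_disjoint hdisj, G.card_neighborFinset_eq_degree] at this
  have := hG hx
  omega

lemma EdgesInTriangles.adj_or_adj_or_adj (hG : EdgesInTriangles G 4) (hv : G.degree v ≤ 7)
    {x p q r : V} (hx : G.Adj v x) (hp : G.Adj v p) (hq : G.Adj v q) (hr : G.Adj v r)
    (hdistinct : [x, p, q, r].Nodup) : G.Adj x p ∨ G.Adj x q ∨ G.Adj x r := by
  by_contra! hnadj
  have := hG.card_add_le_degree hx (T := [x, p, q, r].toFinset) (by simp_all)
  rw [List.toFinset_card_of_nodup hdistinct] at this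
  simp only [List.length_cons, List.length_nil] at this
  omega

/-- Two nonadjacent neighbours of a vertex of degree at most seven in a graph all of whose edges
lie in four triangles. -/
structure IsNonadjPair (G : SimpleGraph V) (v a a' : V) : Prop where
  edgesInTriangles : EdgesInTriangles G 4
  degree_le : G.degree v ≤ 7
  left_adj : G.Adj v a
  right_adj : G.Adj v a'
  ne : a ≠ a'
  not_adj : ¬ G.Adj a a'

namespace IsNonadjPair

lemma symm (h : IsNonadjPair G v a a') : IsNonadjPair G v a' a :=
  ⟨h.edgesInTriangles, h.degree_le, h.right_adj, h.left_adj, h.ne.symm,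
    fun hadj => h.not_adj hadj.symm⟩

lemma left_adj_or_adj (h : IsNonadjPair G v a a') {p q : V}
    (hp : p ∈ G.neighborSet v \ {a, a'}) (hq : q ∈ G.neighborSet v \ {a, a'}) (hpq : p ≠ q) :
    G.Adj a p ∨ G.Adj a q := by
  have := h.edgesInTriangles.adj_or_adj_or_adj h.degree_le h.left_adj h.right_adj hp.1 hq.1
    (by simp_all [eq_comm, h.ne])
  simpa [h.not_adj] using this

lemma right_adj_or_adj (h : IsNonadjPair G v a a') {p q : V}
    (hp : p ∈ G.neighborSet v \ {a, a'}) (hq : q ∈ G.neighborSet v \ {a, a'}) (hpq : p ≠ q) :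
    G.Adj a' p ∨ G.Adj a' q := by
  rw [Set.pair_comm] at hp hq
  exact h.symm.left_adj_or_adj hp hq hpq

lemma isLinkPart_pair (h : IsNonadjPair G v a a') {p q : V} (hp : p ∈ G.neighborSet v \ {a, a'})
    (hq : q ∈ G.neighborSet v \ {a, a'}) (hpq : G.Adj p q) : IsLinkPart G v a a' {p, q} where
  subset := Set.pair_subset hp hq
  connected := SimpleGraph.induce_pair_connected_of_adj hpq
  left_adj := by simpa using h.left_adj_or_adj hp hq hpq.ne
  right_adj := by simpa using h.right_adj_or_adj hp hq hpq.ne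

lemma hasLinkTriangle_of_two_common (h : IsNonadjPair G v a a') {s t p q : V}
    (hs : G.Adj v s ∧ G.Adj a s ∧ G.Adj a' s) (ht : G.Adj v t ∧ G.Adj a t ∧ G.Adj a' t)
    (hp : p ∈ G.neighborSet v \ {a, a'}) (hq : q ∈ G.neighborSet v \ {a, a'})
    (hnodup : [s, t, p, q].Nodup) (hst : G.Adj s t) (hpq : G.Adj p q)
    (hs_pq : G.Adj s p ∨ G.Adj s q) (ht_pq : G.Adj t p ∨ G.Adj t q) :
    HasLinkTriangle G v a a' := by
  refine ⟨{s}, {t}, {p, q}, isLinkPart_singleton hs.1 hs.2.1 hs.2.2,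
    isLinkPart_singleton ht.1 ht.2.1 ht.2.2, h.isLinkPart_pair hp hq hpq, ?_, ?_, ?_⟩ <;>
    simp_all [BranchAdj]

lemma hasLinkTriangle_of_one_common (h : IsNonadjPair G v a a') {s p p' q q' : V}
    (hs : G.Adj v s ∧ G.Adj a s ∧ G.Adj a' s) (hp : p ∈ G.neighborSet v \ {a, a'})
    (hp' : p' ∈ G.neighborSet v \ {a, a'}) (hq : q ∈ G.neighborSet v \ {a, a'})
    (hq' : q' ∈ G.neighborSet v \ {a, a'}) (hnodup : [s, p, p', q, q'].Nodup)
    (hpp' : G.Adj p p') (hqq' : G.Adj q q') (hs_p : G.Adj s p') (hs_q : G.Adj s q')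
    (hp_q : G.Adj p q ∨ G.Adj p q') : HasLinkTriangle G v a a' := by
  refine ⟨{s}, {p, p'}, {q, q'}, isLinkPart_singleton hs.1 hs.2.1 hs.2.2,
    h.isLinkPart_pair hp hp' hpp', h.isLinkPart_pair hq hq' hqq', ?_, ?_, ?_⟩ <;>
    simp_all [BranchAdj]
  tauto

lemma exists_common_adj (h : IsNonadjPair G v a a') : ∃ s t u x, [s, t, u, x].Nodup ∧
    (∀ y ∈ [s, t, u], G.Adj v y ∧ G.Adj a y ∧ G.Adj a' y) ∧
    ∀ y ∈ [s, t, u, x], y ∈ G.neighborSet v \ {a, a'} := by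
  set N := G.neighborFinset v ∩ G.neighborFinset a
  set N' := G.neighborFinset v ∩ G.neighborFinset a'
  have hN : 4 ≤ N.card := h.edgesInTriangles h.left_adj
  have hN' : 4 ≤ N'.card := h.edgesInTriangles h.right_adj
  have hregion {y : V} (hy : y ∈ N ∪ N') : y ∈ G.neighborSet v \ {a, a'} := by
    have := h.not_adj
    have := mt SimpleGraph.Adj.symm this
    simp only [N, N', Finset.mem_union, Finset.mem_inter, SimpleGraph.mem_neighborFinset] at hy
    refine ⟨by simp only [SimpleGraph.mem_neighborSet]; tauto, ?_⟩
    rintro (rfl | rfl) <;> simp_all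
  have hunion : (N ∪ N').card + 2 ≤ 7 := by
    have hsub : N ∪ N' ⊆ G.neighborFinset v \ {a, a'} := fun y hy => by
      simpa using hregion hy
    have hpair : ({a, a'} : Finset V) ⊆ G.neighborFinset v := by
      simp [Finset.insert_subset_iff, h.left_adj, h.right_adj]
    have := Finset.card_le_card hsub
    have := Finset.card_sdiff_add_card_eq_card hpair
    rw [Finset.card_pair h.ne, G.card_neighborFinset_eq_degree] at this
    have := h.degree_le
    omega
  have hinter : 2 < (N ∩ N').card := by
    have := Finset.card_union_add_card_inter N N'
    omega
  obtain ⟨s, hs, t, ht, u, hu, hst, hsu, htu⟩ := Finset.two_lt_card.mp hinter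
  obtain ⟨x, hx, hx'⟩ : ∃ x ∈ N, x ∉ ({s, t, u} : Finset V) :=
    Finset.exists_mem_notMem_of_card_lt_card (Finset.card_le_three.trans_lt hN)
  refine ⟨s, t, u, x, by simp_all [eq_comm], ?_, ?_⟩
  · have hcommon {y : V} (hy : y ∈ N ∩ N') : G.Adj v y ∧ G.Adj a y ∧ G.Adj a' y := by
      simp only [N, N', Finset.mem_inter, SimpleGraph.mem_neighborFinset] at hy
      tauto
    simpa using ⟨hcommon hs, hcommon ht, hcommon hu⟩
  · have hsub : N ∩ N' ⊆ N ∪ N' := Finset.inter_subset_left.trans Finset.subset_union_left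
    simp only [List.forall_mem_cons]
    exact ⟨hregion (hsub hs), hregion (hsub ht), hregion (hsub hu),
      hregion (Finset.subset_union_left hx), List.forall_mem_nil _⟩

lemma hasLinkTriangle_of_adj_or_adj (h : IsNonadjPair G v a a')
    (hR : ∀ p ∈ G.neighborSet v \ {a, a'}, ∀ q ∈ G.neighborSet v \ {a, a'},
      ∀ r ∈ G.neighborSet v \ {a, a'}, p ≠ q → p ≠ r → q ≠ r → G.Adj p q ∨ G.Adj p r) :
    HasLinkTriangle G v a a' := by
  obtain ⟨s, t, u, x, hnodup, hcommon, hregion⟩ := h.exists_common_adj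
  simp only [List.forall_mem_cons] at hcommon hregion
  obtain ⟨hsR, htR, huR, hxR, -⟩ := hregion
  obtain ⟨⟨hst, hsu, hsx⟩, ⟨htu, htx⟩, hux⟩ :
      (s ≠ t ∧ s ≠ u ∧ s ≠ x) ∧ (t ≠ u ∧ t ≠ x) ∧ u ≠ x := by simpa using hnodup
  have hmatching : G.Adj s t ∧ G.Adj u x ∨ G.Adj s u ∧ G.Adj t x := by
    by_cases hstux : G.Adj s t ∧ G.Adj u x
    · exact Or.inl hstux
    · refine Or.inr ?_
      rcases not_and_or.mp hstux with hnadj | hnadj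
      · exact ⟨(hR s hsR t htR u huR hst hsu htu).resolve_left hnadj,
          (hR t htR s hsR x hxR hst.symm htx hsx).resolve_left fun hts => hnadj hts.symm⟩
      · exact ⟨((hR u huR x hxR s hsR hux hsu.symm hsx.symm).resolve_left hnadj).symm,
          ((hR x hxR u huR t htR hux.symm htx.symm htu.symm).resolve_left
            fun hxu => hnadj hxu.symm).symm⟩
  rcases hmatching with ⟨hadj, hadj'⟩ | ⟨hadj, hadj'⟩
  · exact h.hasLinkTriangle_of_two_common hcommon.1 hcommon.2.1 huR hxR hnodup hadj hadj'
      (hR s hsR u huR x hxR hsu hsx hux) (hR t htR u huR x hxR htu htx hux)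
  · exact h.hasLinkTriangle_of_two_common hcommon.1 hcommon.2.2.1 htR hxR
      (((List.Perm.swap _ _ _).cons s).nodup hnodup) hadj hadj'
      (hR s hsR t htR x hxR hst hsx htx) (hR u huR t htR x hxR htu.symm hux htx)

lemma adj_of_not_adj_of_not_adj (h : IsNonadjPair G v a a') {x p q y : V} (hx : G.Adj v x)
    (hp : G.Adj v p) (hq : G.Adj v q) (hy : G.Adj v y) (hnodup : [x, p, q, y].Nodup)
    (hxp : ¬ G.Adj x p) (hxq : ¬ G.Adj x q) : G.Adj x y :=
  ((h.edgesInTriangles.adj_or_adj_or_adj h.degree_le hx hp hq hy hnodup).resolve_left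
    hxp).resolve_left hxq

lemma common_of_not_adj_of_not_adj (h : IsNonadjPair G v a a') {x p q : V}
    (hx : x ∈ G.neighborSet v \ {a, a'}) (hp : p ∈ G.neighborSet v \ {a, a'})
    (hq : q ∈ G.neighborSet v \ {a, a'}) (hnodup : [x, p, q].Nodup)
    (hxp : ¬ G.Adj x p) (hxq : ¬ G.Adj x q) : G.Adj v x ∧ G.Adj a x ∧ G.Adj a' x := by
  refine ⟨hx.1, (h.adj_of_not_adj_of_not_adj hx.1 hp.1 hq.1 h.left_adj ?_ hxp hxq).symm,
    (h.adj_of_not_adj_of_not_adj hx.1 hp.1 hq.1 h.right_adj ?_ hxp hxq).symm⟩ <;> simp_all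

lemma exists_two_others (h : IsNonadjPair G v a a') {s p q : V}
    (hs : s ∈ G.neighborSet v \ {a, a'}) (hp : p ∈ G.neighborSet v \ {a, a'})
    (hq : q ∈ G.neighborSet v \ {a, a'}) (hnodup : [s, p, q].Nodup)
    (hsp : ¬ G.Adj s p) (hsq : ¬ G.Adj s q) :
    ∃ p' ∈ G.neighborSet v \ {a, a'}, ∃ q' ∈ G.neighborSet v \ {a, a'},
      [s, p, q, p', q'].Nodup := by
  have hdeg : 3 + 4 ≤ G.degree v := by
    have := h.edgesInTriangles.card_add_le_degree hs.1 (T := [s, p, q].toFinset)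
      (by simpa [hsp, hsq] using ⟨hs.1, hp.1, hq.1⟩)
    rwa [List.toFinset_card_of_nodup hnodup] at this
  have hcard : 1 < (G.neighborFinset v \ {a, a', s, p, q}).card := by
    have := Finset.le_card_sdiff {a, a', s, p, q} (G.neighborFinset v)
    have := Finset.card_le_five (a := a) (b := a') (c := s) (d := p) (e := q)
    rw [G.card_neighborFinset_eq_degree] at *
    omega
  obtain ⟨p', hp', q', hq', hpq'⟩ := Finset.one_lt_card.mp hcard
  simp only [Finset.mem_sdiff, SimpleGraph.mem_neighborFinset, Finset.mem_insert,
    Finset.mem_singleton, not_or] at hp' hq'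
  exact ⟨p', ⟨hp'.1, by simp [hp'.2]⟩, q', ⟨hq'.1, by simp [hq'.2]⟩, by simp_all [eq_comm]⟩

lemma hasLinkTriangle_of_four_not_adj (h : IsNonadjPair G v a a') {s p q p' q' : V}
    (hs : s ∈ G.neighborSet v \ {a, a'}) (hp : p ∈ G.neighborSet v \ {a, a'})
    (hq : q ∈ G.neighborSet v \ {a, a'}) (hp' : p' ∈ G.neighborSet v \ {a, a'})
    (hq' : q' ∈ G.neighborSet v \ {a, a'}) (hnodup : [s, p, q, p', q'].Nodup)
    (hsp : ¬ G.Adj s p) (hsq : ¬ G.Adj s q) (hpp' : ¬ G.Adj p p') (hqp' : ¬ G.Adj q p') :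
    HasLinkTriangle G v a a' := by
  have hps : ¬ G.Adj p s := fun hadj => hsp hadj.symm
  have hqs : ¬ G.Adj q s := fun hadj => hsq hadj.symm
  have hdistinct : (s ≠ p ∧ s ≠ q ∧ s ≠ p' ∧ s ≠ q') ∧ (p ≠ q ∧ p ≠ p' ∧ p ≠ q') ∧
    (q ≠ p' ∧ q ≠ q') ∧ p' ≠ q' := by simpa using hnodup
  have hp_adj {y : V} (hy : G.Adj v y) (hne : [p, s, p', y].Nodup) : G.Adj p y :=
    h.adj_of_not_adj_of_not_adj hp.1 hs.1 hp'.1 hy hne hps hpp'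
  have hqq' : G.Adj q q' := h.adj_of_not_adj_of_not_adj hq.1 hs.1 hp'.1 hq'.1
    (by simp [hdistinct, hdistinct.1.2.1.symm]) hqs hqp'
  refine h.hasLinkTriangle_of_two_common (s := p) (t := q) (p := q') (q := s)
    (h.common_of_not_adj_of_not_adj hp hs hp' ?_ hps hpp')
    (h.common_of_not_adj_of_not_adj hq hs hp' ?_ hqs hqp') hq' hs ?_ (hp_adj hq.1 ?_)
    (h.adj_of_not_adj_of_not_adj hs.1 hp.1 hq.1 hq'.1 ?_ hsp hsq).symm
    (Or.inl (hp_adj hq'.1 ?_)) (Or.inl hqq') <;>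
  simp [hdistinct, hdistinct.1.1.symm, hdistinct.1.2.1.symm, hdistinct.1.2.2.2.symm,
    hdistinct.2.2.1.1.symm]

lemma hasLinkTriangle_of_two_adj (h : IsNonadjPair G v a a') {s p q p' q' : V}
    (hs : s ∈ G.neighborSet v \ {a, a'}) (hp : p ∈ G.neighborSet v \ {a, a'})
    (hq : q ∈ G.neighborSet v \ {a, a'}) (hp' : p' ∈ G.neighborSet v \ {a, a'})
    (hq' : q' ∈ G.neighborSet v \ {a, a'}) (hnodup : [s, p, q, p', q'].Nodup)
    (hsp : ¬ G.Adj s p) (hsq : ¬ G.Adj s q) (hpp' : G.Adj p p') (hqq' : G.Adj q q') :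
    HasLinkTriangle G v a a' := by
  have hdistinct : (s ≠ p ∧ s ≠ q ∧ s ≠ p' ∧ s ≠ q') ∧ (p ≠ q ∧ p ≠ p' ∧ p ≠ q') ∧
    (q ≠ p' ∧ q ≠ q') ∧ p' ≠ q' := by simpa using hnodup
  have hs_adj {y : V} (hy : G.Adj v y) (hne : [s, p, q, y].Nodup) : G.Adj s y :=
    h.adj_of_not_adj_of_not_adj hs.1 hp.1 hq.1 hy hne hsp hsq
  have hp_adj : G.Adj p q ∨ G.Adj p q' :=
    (h.edgesInTriangles.adj_or_adj_or_adj h.degree_le hp.1 hs.1 hq.1 hq'.1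
      (by simp [hdistinct, hdistinct.1.1.symm])).resolve_left fun hps => hsp hps.symm
  refine h.hasLinkTriangle_of_one_common
    (h.common_of_not_adj_of_not_adj hs hp hq ?_ hsp hsq) hp hp' hq hq' ?_
    hpp' hqq' (hs_adj hp'.1 ?_) (hs_adj hq'.1 ?_) hp_adj <;>
  simp [hdistinct, hdistinct.2.2.1.1.symm]

lemma hasLinkTriangle_of_not_adj_of_not_adj (h : IsNonadjPair G v a a') {s p q : V}
    (hs : s ∈ G.neighborSet v \ {a, a'}) (hp : p ∈ G.neighborSet v \ {a, a'})
    (hq : q ∈ G.neighborSet v \ {a, a'}) (hnodup : [s, p, q].Nodup)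
    (hsp : ¬ G.Adj s p) (hsq : ¬ G.Adj s q) : HasLinkTriangle G v a a' := by
  obtain ⟨p', hp', q', hq', hnodup'⟩ := h.exists_two_others hs hp hq hnodup hsp hsq
  have hswap : [s, p, q, q', p'].Nodup :=
    ((((List.Perm.swap _ _ _).cons _).cons _).cons _).nodup hnodup'
  by_cases hp'_pq : ¬ G.Adj p p' ∧ ¬ G.Adj q p'
  · exact h.hasLinkTriangle_of_four_not_adj hs hp hq hp' hq' hnodup' hsp hsq hp'_pq.1 hp'_pq.2
  by_cases hq'_pq : ¬ G.Adj p q' ∧ ¬ G.Adj q q'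
  · exact h.hasLinkTriangle_of_four_not_adj hs hp hq hq' hp' hswap hsp hsq hq'_pq.1 hq'_pq.2
  have hother {y : V} (hy : y ∈ G.neighborSet v \ {a, a'}) (hsy : ¬ G.Adj s y)
      (hne : [y, s, p', q'].Nodup) : G.Adj y p' ∨ G.Adj y q' :=
    (h.edgesInTriangles.adj_or_adj_or_adj h.degree_le hy.1 hs.1 hp'.1 hq'.1 hne).resolve_left
      fun hys => hsy hys.symm
  have hp_adj := hother hp hsp (by simp_all [eq_comm])
  have hq_adj := hother hq hsq (by simp_all [eq_comm])
  have hmatching : G.Adj p p' ∧ G.Adj q q' ∨ G.Adj p q' ∧ G.Adj q p' := by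
    clear * - hp_adj hq_adj hp'_pq hq'_pq
    tauto
  rcases hmatching with ⟨hpp', hqq'⟩ | ⟨hpq', hqp'⟩
  · exact h.hasLinkTriangle_of_two_adj hs hp hq hp' hq' hnodup' hsp hsq hpp' hqq'
  · exact h.hasLinkTriangle_of_two_adj hs hp hq hq' hp' hswap hsp hsq hpq' hqp'

theorem hasLinkTriangle (h : IsNonadjPair G v a a') : HasLinkTriangle G v a a' := by
  by_contra hnot
  refine hnot (h.hasLinkTriangle_of_adj_or_adj fun s hs p hp q hq hsp hsq hpq => ?_)
  by_contra! hnadj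
  exact hnot (h.hasLinkTriangle_of_not_adj_of_not_adj hs hp hq (by simp [hsp, hsq, hpq])
    hnadj.1 hnadj.2)

end IsNonadjPair

end LinkTriangles

section LocalMinors

variable {V : Type*} {G : SimpleGraph V} {v a a' : V}

lemma HasLinkTriangle.hasMinor (h : HasLinkTriangle G v a a') (hva : G.Adj v a)
    (hva' : G.Adj v a') (hne : a ≠ a') {C : Set V} (hC : (G.induce C).Connected) (hvC : v ∉ C)
    (hCv : Disjoint C (G.neighborSet v)) (ha : ∃ z ∈ C, G.Adj z a) (ha' : ∃ z ∈ C, G.Adj z a') :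
    HasMinor G (⊤ : SimpleGraph (Fin 6)) := by
  obtain ⟨P, Q, R, hP, hQ, hR, hPQ, hPR, hQR⟩ := h
  obtain ⟨z, hz, hza⟩ := ha
  obtain ⟨z', hz', hz'a'⟩ := ha'
  have haC : (G.induce (insert a C)).Connected := by
    rw [Set.insert_eq]
    exact SimpleGraph.connected_induce_union SimpleGraph.Preconnected.of_subsingleton
      hC.preconnected rfl hz hza.symm
  have hv_aC : BranchAdj G {v} (insert a C) :=
    ⟨by simp [hvC, hva.ne], v, rfl, a, Set.mem_insert a C, hva⟩
  have hv_a' : BranchAdj G {v} {a'} := ⟨by simp [hva'.ne], v, rfl, a', rfl, hva'⟩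
  have haC_a' : BranchAdj G (insert a C) {a'} :=
    ⟨by simpa [hne.symm] using Set.disjoint_right.mp hCv hva',
      z', Set.mem_insert_of_mem a hz', a', rfl, hz'a'⟩
  have hv_part {S : Set V} (hS : IsLinkPart G v a a' S) : BranchAdj G {v} S := by
    obtain ⟨x, hx, -⟩ := hS.left_adj
    exact ⟨Set.disjoint_singleton_left.mpr fun hvS => G.irrefl (hS.subset hvS).1,
      v, rfl, x, hx, (hS.subset hx).1⟩
  have haC_part {S : Set V} (hS : IsLinkPart G v a a' S) : BranchAdj G (insert a C) S := by
    obtain ⟨x, hx, hax⟩ := hS.left_adj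
    refine ⟨Set.disjoint_insert_left.mpr ⟨fun haS => (hS.subset haS).2 (Or.inl rfl),
      hCv.mono_right fun y hy => (hS.subset hy).1⟩, a, Set.mem_insert a C, x, hx, hax⟩
  have ha'_part {S : Set V} (hS : IsLinkPart G v a a' S) : BranchAdj G {a'} S := by
    obtain ⟨x, hx, hax⟩ := hS.right_adj
    exact ⟨Set.disjoint_singleton_left.mpr fun haS => (hS.subset haS).2 (Or.inr rfl),
      a', rfl, x, hx, hax⟩
  refine hasMinor_top_of_pairwise (L := [{v}, insert a C, {a'}, P, Q, R]) rfl ?_ ?_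
  · simp only [List.forall_mem_cons]
    exact ⟨.of_subsingleton, haC, .of_subsingleton, hP.connected,
      hQ.connected, hR.connected, List.forall_mem_nil _⟩
  · simp [hv_aC, hv_a', haC_a', hv_part, haC_part, ha'_part, hP, hQ, hR, hPQ, hPR, hQR]

lemma connected_of_card_le_three {W : Type*} [Fintype W] [Nonempty W] {H : SimpleGraph W}
    (hW : Fintype.card W ≤ 3) (hH : ∀ x, ∃ y, H.Adj x y) : H.Connected := by
  refine ⟨fun x y => ?_⟩
  rcases eq_or_ne x y with rfl | hne
  · exact SimpleGraph.Reachable.rfl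
  by_cases hxy : H.Adj x y
  · exact hxy.reachable
  obtain ⟨x', hx'⟩ := hH x
  obtain ⟨y', hy'⟩ := hH y
  obtain rfl : x' = y' := by
    by_contra hne'
    have hyx : ¬ H.Adj y x := fun h => hxy h.symm
    have hnodup : [x, y, x', y'].Nodup := by
      simp only [List.nodup_cons, List.mem_cons, List.not_mem_nil, or_false, not_or]
      exact ⟨⟨hne, hx'.ne, fun h => hyx (h ▸ hy')⟩, ⟨fun h => hxy (h ▸ hx'), hy'.ne⟩,
        hne', not_false, List.nodup_nil⟩
    have := hnodup.length_le_card
    simp only [List.length_cons, List.length_nil] at this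
    omega
  exact hx'.reachable.trans hy'.symm.reachable

variable [Fintype V]

lemma EdgesInTriangles.exists_adj_notMem (hG : EdgesInTriangles G 4) {K : Finset V} {k : V}
    (hk : G.Adj v k) (hkK : k ∈ K) (hK : K.card = 4) : ∃ z, G.Adj v z ∧ z ∉ K ∧ G.Adj k z := by
  have hlt : (K.erase k).card < (G.neighborFinset v ∩ G.neighborFinset k).card := by
    rw [Finset.card_erase_of_mem hkK, hK]
    exact hG hk
  obtain ⟨z, hz, hzK⟩ := Finset.exists_mem_notMem_of_card_lt_card hlt
  simp only [Finset.mem_inter, SimpleGraph.mem_neighborFinset] at hz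
  exact ⟨z, hz.1, fun h => hzK (Finset.mem_erase.mpr ⟨hz.2.ne', h⟩), hz.2⟩

lemma EdgesInTriangles.exists_connected_joined (hG : EdgesInTriangles G 4)
    (hv : G.degree v ≤ 7) {K : Finset V} (hKv : K ⊆ G.neighborFinset v) (hcard : K.card = 4) :
    ∃ Z ⊆ G.neighborSet v \ (K : Set V), (G.induce Z).Connected ∧ ∀ k ∈ K, ∃ z ∈ Z, G.Adj k z := by
  set Z : Finset V := G.neighborFinset v \ K with hZ
  have hZsub : (Z : Set V) ⊆ G.neighborSet v \ (K : Set V) := by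
    simp [hZ]
  have hjoined {k : V} (hk : k ∈ K) : ∃ z ∈ Z, G.Adj k z := by
    obtain ⟨z, hvz, hzK, hkz⟩ := hG.exists_adj_notMem
      ((G.mem_neighborFinset v k).mp (hKv hk)) hk hcard
    exact ⟨z, by simp [hZ, hvz, hzK], hkz⟩
  by_cases hisolated : ∃ z ∈ Z, ∀ y ∈ Z, ¬ G.Adj z y
  · obtain ⟨z, hz, hzZ⟩ := hisolated
    have hvz : G.Adj v z := (hZsub hz).1
    have hsub : G.neighborFinset v ∩ G.neighborFinset z ⊆ K := fun y hy => by
      simp only [Finset.mem_inter, SimpleGraph.mem_neighborFinset] at hy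
      by_contra hyK
      exact hzZ y (by simp [hZ, hy.1, hyK]) hy.2
    have heq := Finset.eq_of_subset_of_card_le hsub (hcard.trans_le (hG hvz))
    refine ⟨{z}, by simpa using hZsub hz, .of_subsingleton, fun k hk => ⟨z, rfl, ?_⟩⟩
    rw [← heq, Finset.mem_inter, SimpleGraph.mem_neighborFinset,
      SimpleGraph.mem_neighborFinset] at hk
    exact hk.2.symm
  · push Not at hisolated
    refine ⟨Z, hZsub, ?_, fun k hk => hjoined hk⟩
    obtain ⟨k, hk⟩ := Finset.card_pos.mp (show 0 < K.card by omega)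
    obtain ⟨z, hz, -⟩ := hjoined hk
    have : Nonempty (Z : Set V) := ⟨z, hz⟩
    refine connected_of_card_le_three ?_ fun ⟨x, hx⟩ => ?_
    · have := Finset.card_sdiff_add_card_eq_card hKv
      rw [G.card_neighborFinset_eq_degree, ← hZ] at this
      simp only [Finset.coe_sort_coe, Fintype.card_coe]
      omega
    · obtain ⟨y, hy, hxy⟩ := hisolated x hx
      exact ⟨⟨y, hy⟩, hxy⟩

lemma EdgesInTriangles.hasMinor_of_isClique (hG : EdgesInTriangles G 4) (hv : G.degree v ≤ 7)
    {K : Finset V} (hK : G.IsClique (K : Set V)) (hKv : K ⊆ G.neighborFinset v)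
    (hcard : K.card = 4) : HasMinor G (⊤ : SimpleGraph (Fin 6)) := by
  obtain ⟨Z, hZ, hZconn, hKZ⟩ := hG.exists_connected_joined hv hKv hcard
  obtain ⟨z⟩ := hZconn.nonempty
  have hvK {k : V} (hk : k ∈ K) : G.Adj v k := (G.mem_neighborFinset v k).mp (hKv hk)
  have hv_Z : BranchAdj G {v} Z :=
    ⟨Set.disjoint_singleton_left.mpr fun hvZ => G.irrefl (hZ hvZ).1, v, rfl, z, z.2, (hZ z.2).1⟩
  have hv_k {k : V} (hk : k ∈ K) : BranchAdj G {v} {k} :=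
    ⟨by simp [(hvK hk).ne], v, rfl, k, rfl, hvK hk⟩
  have hZ_k {k : V} (hk : k ∈ K) : BranchAdj G Z {k} := by
    obtain ⟨z, hz, hkz⟩ := hKZ k hk
    exact ⟨Set.disjoint_singleton_right.mpr fun hkZ => (hZ hkZ).2 hk, z, hz, k, rfl, hkz.symm⟩
  have hk_k' : K.toList.Pairwise fun k k' => BranchAdj G {k} {k'} :=
    K.nodup_toList.imp_of_mem fun hk hk' hne =>
      ⟨Set.disjoint_singleton.mpr hne, _, rfl, _, rfl,
        hK (Finset.mem_toList.mp hk) (Finset.mem_toList.mp hk') hne⟩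
  refine hasMinor_top_of_pairwise (L := {v} :: Z :: K.toList.map ({·})) (by simp [hcard]) ?_ ?_
  · simp [hZconn]
  · simpa [List.pairwise_map, hv_Z, hk_k'] using ⟨fun k hk => hv_k hk, fun k hk => hZ_k hk⟩

lemma EdgesInTriangles.exists_isNonadjPair (hG : EdgesInTriangles G 4) (hv : G.degree v ≤ 7)
    {u : V} (hu : G.Adj v u) (hfree : ¬ HasMinor G (⊤ : SimpleGraph (Fin 6))) :
    ∃ a a', IsNonadjPair G v a a' := by
  by_contra! hnone
  have hclique : G.IsClique (G.neighborFinset v : Set V) := fun a ha a' ha' hne => by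
    simp only [SimpleGraph.coe_neighborFinset, SimpleGraph.mem_neighborSet] at ha ha'
    by_contra hnadj
    exact hnone a a' ⟨hG, hv, ha, ha', hne, hnadj⟩
  have hdeg : 4 ≤ (G.neighborFinset v).card := by
    have := hG.card_add_le_degree hu (T := ∅) (by simp)
    simpa using this
  obtain ⟨K, hKv, hK⟩ := Finset.exists_subset_card_eq hdeg
  exact hfree (hG.hasMinor_of_isClique hv (hclique.subset (by exact_mod_cast hKv)) hKv hK)

lemma exists_adj_not_adj_of_degree_le (hva : G.Adj v a) (hva' : G.Adj v a') (hne : a ≠ a')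
    (hnadj : ¬ G.Adj a a') (hdeg : G.degree v ≤ G.degree a) :
    ∃ y, G.Adj a y ∧ y ≠ v ∧ ¬ G.Adj v y := by
  by_contra! hnear
  have hsub : G.neighborFinset a ⊆ insert v (G.neighborFinset v \ {a, a'}) := fun y hy => by
    rw [SimpleGraph.mem_neighborFinset] at hy
    rcases eq_or_ne y v with rfl | hyv
    · exact Finset.mem_insert_self _ _
    · have : y ≠ a' := fun h => hnadj (h ▸ hy)
      simp [hnear y hy hyv, hy.ne', this]
  have hpair : ({a, a'} : Finset V) ⊆ G.neighborFinset v := by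
    simp [Finset.insert_subset_iff, hva, hva']
  have := (Finset.card_le_card hsub).trans (Finset.card_insert_le _ _)
  have := Finset.card_sdiff_add_card_eq_card hpair
  rw [Finset.card_pair hne, G.card_neighborFinset_eq_degree] at this
  rw [G.card_neighborFinset_eq_degree] at *
  omega

end LocalMinors

section Fragments

variable {V : Type*} {G : SimpleGraph V}

lemma exists_adj_inter_diff_of_connected {S T : Set V} (hS : (G.induce S).Connected) {x y : V}
    (hxS : x ∈ S) (hxT : x ∈ T) (hyS : y ∈ S) (hyT : y ∉ T) :
    ∃ p ∈ S ∩ T, ∃ q ∈ S \ T, G.Adj p q := by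
  obtain ⟨walk⟩ := hS.preconnected ⟨x, hxS⟩ ⟨y, hyS⟩
  obtain ⟨d, -, hfst, hsnd⟩ := walk.exists_boundary_dart (Subtype.val ⁻¹' T) hxT hyT
  exact ⟨d.fst, ⟨d.fst.2, hfst⟩, d.snd, ⟨d.snd.2, hsnd⟩, d.adj⟩

variable [Fintype V]

/-- The vertices outside `C` with a neighbour in `C`. -/
noncomputable def outerBoundary (G : SimpleGraph V) (C : Finset V) : Finset V :=
  {w | w ∉ C ∧ ∃ z ∈ C, G.Adj z w}

lemma mem_outerBoundary {C : Finset V} {w : V} :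
    w ∈ outerBoundary G C ↔ w ∉ C ∧ ∃ z ∈ C, G.Adj z w := by
  simp [outerBoundary]

lemma mem_union_outerBoundary_of_adj {C : Finset V} {x y : V} (hx : x ∈ C) (hxy : G.Adj x y) :
    y ∈ C ∪ outerBoundary G C := by
  by_cases hy : y ∈ C
  · exact Finset.mem_union_left _ hy
  · exact Finset.mem_union_right _ (mem_outerBoundary.mpr ⟨hy, x, hx, hxy⟩)

lemma sum_card_neighborFinset_inter (G : SimpleGraph V) (S : Finset V) :
    ∑ x ∈ S, (G.neighborFinset x ∩ S).card =
      2 * (G.induce (S : Set V)).edgeFinset.card := by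
  rw [← SimpleGraph.sum_degrees_eq_twice_card_edges, ← Finset.sum_coe_sort]
  refine Finset.sum_congr rfl fun x _ => ?_
  have := congrArg Finset.card (G.map_neighborFinset_induce (s := (S : Set V)) x)
  rw [Finset.card_map, SimpleGraph.card_neighborFinset_eq_degree] at this
  convert this.symm using 2
  simp

/-- A component of `G - N[v]`: a connected set of vertices at distance at least two from `v`
whose outer boundary consists of neighbours of `v`. -/
structure IsFarComponent (G : SimpleGraph V) (v : V) (D : Finset V) : Prop where
  connected : (G.induce (D : Set V)).Connected
  notMem : v ∉ D
  not_adj : ∀ x ∈ D, ¬ G.Adj v x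
  adj_of_mem_outerBoundary : ∀ w ∈ outerBoundary G D, G.Adj v w

lemma exists_isFarComponent {v y : V} (hyv : y ≠ v) (hy : ¬ G.Adj v y) :
    ∃ D, IsFarComponent G v D ∧ y ∈ D := by
  let P : Set (Finset V) := {D | (G.induce (D : Set V)).Connected ∧ v ∉ D ∧
    (∀ x ∈ D, ¬ G.Adj v x) ∧ y ∈ D}
  have hP : P.Nonempty := by
    refine ⟨{y}, ?_, by simpa using hyv.symm, by simpa using hy, by simp⟩
    rw [Finset.coe_singleton]
    exact .of_subsingleton
  obtain ⟨D, ⟨hconn, hvD, hfar, hyD⟩, hmax⟩ := P.toFinite.exists_maximal hP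
  refine ⟨D, ⟨hconn, hvD, hfar, fun w hw => ?_⟩, hyD⟩
  obtain ⟨hwD, z, hz, hzw⟩ := mem_outerBoundary.mp hw
  by_contra hvw
  have hvw' : v ≠ w := fun h => hfar z hz (h ▸ hzw.symm)
  have hinsert : insert w D ∈ P := by
    refine ⟨?_, by simp [hvw', hvD], by simpa [hvw] using hfar, by simp [hyD]⟩
    rw [Finset.coe_insert, Set.insert_eq]
    exact SimpleGraph.connected_induce_union SimpleGraph.Preconnected.of_subsingleton
      hconn.preconnected rfl hz hzw.symm
  exact hwD (hmax hinsert (Finset.subset_insert w D) (Finset.mem_insert_self w D))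

namespace IsFarComponent

variable {v : V} {D D' : Finset V}

lemma subset_of_mem (hD : IsFarComponent G v D) (hD' : IsFarComponent G v D') {x : V}
    (hx : x ∈ D) (hx' : x ∈ D') : D ⊆ D' := by
  by_contra hsub
  obtain ⟨y, hy, hy'⟩ := Finset.not_subset.mp hsub
  obtain ⟨p, ⟨-, hp⟩, q, ⟨hqD, hqD'⟩, hpq⟩ :=
      exists_adj_inter_diff_of_connected hD.connected hx hx' hy hy'
  exact hD.not_adj q hqD
    (hD'.adj_of_mem_outerBoundary q (mem_outerBoundary.mpr ⟨hqD', p, hp, hpq⟩))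

lemma mem_of_adj (hD : IsFarComponent G v D) {x y : V} (hx : x ∈ D) (hxy : G.Adj x y)
    (hy : ¬ G.Adj v y) : y ∈ D := by
  by_contra hyD
  exact hy (hD.adj_of_mem_outerBoundary y (mem_outerBoundary.mpr ⟨hyD, x, hx, hxy⟩))

lemma isClique_outerBoundary (hD : IsFarComponent G v D) (hG : EdgesInTriangles G 4)
    (hv : G.degree v ≤ 7) (hfree : ¬ HasMinor G (⊤ : SimpleGraph (Fin 6))) :
    G.IsClique (outerBoundary G D : Set V) := by
  intro a ha a' ha' hne
  by_contra hnadj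
  have hva := hD.adj_of_mem_outerBoundary a ha
  have hva' := hD.adj_of_mem_outerBoundary a' ha'
  have hpair : IsNonadjPair G v a a' := ⟨hG, hv, hva, hva', hne, hnadj⟩
  exact hfree (hpair.hasLinkTriangle.hasMinor hva hva' hne hD.connected hD.notMem
    (Set.disjoint_left.mpr hD.not_adj) (mem_outerBoundary.mp ha).2 (mem_outerBoundary.mp ha').2)

lemma card_outerBoundary_le (hD : IsFarComponent G v D) (hG : EdgesInTriangles G 4)
    (hv : G.degree v ≤ 7) (hfree : ¬ HasMinor G (⊤ : SimpleGraph (Fin 6))) :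
    (outerBoundary G D).card ≤ 3 := by
  by_contra! hcard
  obtain ⟨K, hK, hKcard⟩ := Finset.exists_subset_card_eq (Nat.succ_le_of_lt hcard)
  exact hfree (hG.hasMinor_of_isClique hv
    ((hD.isClique_outerBoundary hG hv hfree).subset (by exact_mod_cast hK))
    (fun x hx => (G.mem_neighborFinset v x).mpr (hD.adj_of_mem_outerBoundary x (hK hx))) hKcard)

end IsFarComponent

/-- A nonempty set of non-isolated vertices cut off by a clique of at most three vertices; it is
the object of the descent. -/
structure IsFragment (G : SimpleGraph V) (C : Finset V) : Prop where
  nonempty : C.Nonempty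
  exists_adj : ∀ x ∈ C, ∃ y, G.Adj x y
  isClique : G.IsClique (outerBoundary G C : Set V)
  card_le : (outerBoundary G C).card ≤ 3
  eq_empty_or_ne_univ : outerBoundary G C = ∅ ∨ C ∪ outerBoundary G C ≠ Finset.univ

lemma exists_isFragment (hne : G ≠ ⊥) : ∃ C, IsFragment G C := by
  obtain ⟨x, y, hxy⟩ := SimpleGraph.ne_bot_iff_exists_adj.mp hne
  let C : Finset V := {x | ∃ y, G.Adj x y}
  have hempty : outerBoundary G C = ∅ := by
    refine Finset.eq_empty_of_forall_notMem fun w hw => ?_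
    obtain ⟨hwC, z, -, hzw⟩ := mem_outerBoundary.mp hw
    exact hwC (by simpa [C] using ⟨z, hzw.symm⟩)
  exact ⟨C, ⟨x, by simpa [C] using ⟨y, hxy⟩⟩, fun x hx => by simpa [C] using hx,
    by simp [hempty], by simp [hempty], Or.inl hempty⟩

lemma IsFarComponent.isFragment {v : V} {D : Finset V} (hD : IsFarComponent G v D)
    (hG : EdgesInTriangles G 4) (hv : G.degree v ≤ 7)
    (hfree : ¬ HasMinor G (⊤ : SimpleGraph (Fin 6))) {y z : V} (hy : y ∈ D) (hyz : G.Adj y z) :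
    IsFragment G D where
  nonempty := ⟨y, hy⟩
  exists_adj x hx := by
    rcases eq_or_ne x y with rfl | hne
    · exact ⟨z, hyz⟩
    · obtain ⟨p, ⟨-, rfl⟩, q, -, hpq⟩ :=
        exists_adj_inter_diff_of_connected hD.connected hx (Set.mem_singleton x) hy hne.symm
      exact ⟨q, hpq⟩
  isClique := hD.isClique_outerBoundary hG hv hfree
  card_le := hD.card_outerBoundary_le hG hv hfree
  eq_empty_or_ne_univ := by
    refine Or.inr fun huniv => ?_
    have hv_mem : v ∈ D ∪ outerBoundary G D := huniv ▸ Finset.mem_univ v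
    rcases Finset.mem_union.mp hv_mem with h | h
    exacts [hD.notMem h, G.irrefl (hD.adj_of_mem_outerBoundary v h)]

namespace IsFragment

variable {C : Finset V}

lemma six_le_card_inter (hC : IsFragment G C) (hG : EdgesInTriangles G 4)
    (hfree : ¬ HasMinor G (⊤ : SimpleGraph (Fin 6))) {x : V} (hx : x ∈ outerBoundary G C) :
    6 ≤ (G.neighborFinset x ∩ (C ∪ outerBoundary G C)).card := by
  set N := G.neighborFinset x ∩ (C ∪ outerBoundary G C) with hN
  by_contra! hlt
  have hNx : ∀ y ∈ N, G.Adj x y := fun y hy =>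
    (G.mem_neighborFinset x y).mp (Finset.mem_inter.mp hy).1
  have hsub : ∀ y ∈ C, G.Adj x y → insert y (G.neighborFinset x ∩ G.neighborFinset y) ⊆ N := by
    intro y hy hxy
    refine Finset.insert_subset (by simp [hN, hxy, hy]) (Finset.inter_subset_inter_left ?_)
    exact fun w hw => mem_union_outerBoundary_of_adj hy ((G.mem_neighborFinset y w).mp hw)
  have hcard : ∀ y, G.Adj x y →
      5 ≤ (insert y (G.neighborFinset x ∩ G.neighborFinset y)).card := fun y hxy => by
    rw [Finset.card_insert_of_notMem (by simp)]
    exact Nat.succ_le_succ (hG hxy)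
  have hdominating : ∀ p ∈ C, p ∈ N → ∀ q ∈ N, p ≠ q → G.Adj p q := by
    intro p hp hpN q hq hne
    have hqN := Finset.eq_of_subset_of_card_le (hsub p hp (hNx p hpN))
      (by have := hcard p (hNx p hpN); omega) ▸ hq
    exact ((G.mem_neighborFinset p q).mp (Finset.mem_inter.mp
      ((Finset.mem_insert.mp hqN).resolve_left hne.symm)).2)
  have hclique : G.IsClique (N : Set V) := by
    intro p hp q hq hne
    rcases Finset.mem_union.mp (Finset.mem_inter.mp hp).2 with hpC | hpK
    · exact hdominating p hpC hp q hq hne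
    rcases Finset.mem_union.mp (Finset.mem_inter.mp hq).2 with hqC | hqK
    · exact (hdominating q hqC hq p hp hne.symm).symm
    · exact hC.isClique hpK hqK hne
  obtain ⟨-, z, hz, hzx⟩ := mem_outerBoundary.mp hx
  have hfive : N.card = 5 := by
    have := Finset.card_le_card (hsub z hz hzx.symm)
    have := hcard z hzx.symm
    omega
  refine hfree (hasMinor_top_of_isNClique (s := insert x N) ⟨?_, ?_⟩)
  · rw [Finset.coe_insert]
    exact hclique.insert fun y hy _ => hNx y hy
  · rw [Finset.card_insert_of_notMem (fun h => G.irrefl (hNx x h)), hfive]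

end IsFragment

lemma IsNonadjPair.exists_far_adj {C : Finset V} {v a a' : V} (h : IsNonadjPair G v a a')
    (ha : a ∈ C) (hdeg : G.degree v ≤ G.degree a) :
    ∃ y ∈ C ∪ outerBoundary G C, y ≠ v ∧ ¬ G.Adj v y ∧ G.Adj a y := by
  obtain ⟨y, hay, hyv, hvy⟩ :=
    exists_adj_not_adj_of_degree_le h.left_adj h.right_adj h.ne h.not_adj hdeg
  exact ⟨y, mem_union_outerBoundary_of_adj ha hay, hyv, hvy, hay⟩

/-- The properties of a counterexample minimal under taking minors from which the contradiction is
derived; a graph without edges on at least one vertex has them too. -/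
structure IsCritical (G : SimpleGraph V) : Prop where
  edgesInTriangles : EdgesInTriangles G 4
  card_edgeFinset_induce_le : ∀ S : Finset V, S.Nonempty → S ≠ Finset.univ →
    (G.induce (S : Set V)).edgeFinset.card + 4 ≤ 4 * S.card
  card_edgeFinset_lt : G.edgeFinset.card < 4 * Fintype.card V
  not_hasMinor : ¬ HasMinor G (⊤ : SimpleGraph (Fin 6))

namespace IsCritical

variable {C : Finset V} {v : V}

lemma exists_degree_le (hG : IsCritical G) (hC : IsFragment G C) : ∃ v ∈ C, G.degree v ≤ 7 := by
  by_contra! hdeg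
  have hinterior : ∀ x ∈ C, 8 ≤ (G.neighborFinset x ∩ (C ∪ outerBoundary G C)).card := by
    intro x hx
    rw [Finset.inter_eq_left.mpr fun y hy =>
      mem_union_outerBoundary_of_adj hx ((G.mem_neighborFinset x y).mp hy)]
    simpa using Nat.succ_le_of_lt (hdeg x hx)
  have hdisj : Disjoint C (outerBoundary G C) :=
    Finset.disjoint_right.mpr fun x hx => (mem_outerBoundary.mp hx).1
  have hcount : 8 * C.card + 6 * (outerBoundary G C).card ≤
      ∑ x ∈ C ∪ outerBoundary G C, (G.neighborFinset x ∩ (C ∪ outerBoundary G C)).card := by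
    rw [Finset.sum_union hdisj]
    refine add_le_add ?_ ?_
    · simpa [mul_comm] using Finset.card_nsmul_le_sum C _ 8 hinterior
    · simpa [mul_comm] using Finset.card_nsmul_le_sum (outerBoundary G C) _ 6 fun x hx =>
        hC.six_le_card_inter hG.edgesInTriangles hG.not_hasMinor hx
  have hcard := Finset.card_union_of_disjoint hdisj
  by_cases huniv : C ∪ outerBoundary G C = Finset.univ
  · have hempty := hC.eq_empty_or_ne_univ.resolve_right (not_not.mpr huniv)
    have := hG.card_edgeFinset_lt
    simp only [huniv, Finset.inter_univ, G.card_neighborFinset_eq_degree,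
      G.sum_degrees_eq_twice_card_edges, Finset.card_univ] at hcount hcard
    rw [hempty, Finset.card_empty] at hcount hcard
    omega
  · rw [sum_card_neighborFinset_inter] at hcount
    have := hG.card_edgeFinset_induce_le _ hC.nonempty.inl huniv
    have := hC.card_le
    omega

lemma exists_isMinimalFragment_degree_le (hG : IsCritical G) (hne : G ≠ ⊥) :
    ∃ C v, Minimal (IsFragment G) C ∧ v ∈ C ∧ G.degree v ≤ 7 ∧
      ∀ x ∈ C, G.degree v ≤ G.degree x := by
  obtain ⟨C, hmin⟩ := (Set.toFinite {C | IsFragment G C}).exists_minimal (exists_isFragment hne)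
  obtain ⟨v, hv, hvmin⟩ := C.exists_min_image (G.degree ·) hmin.prop.nonempty
  obtain ⟨x, hx, hx7⟩ := hG.exists_degree_le hmin.prop
  exact ⟨C, v, hmin, hv, (hvmin x hx).trans hx7, hvmin⟩

lemma exists_mem_boundary_mem_far (hG : IsCritical G) (hC : Minimal (IsFragment G) C) (hv : v ∈ C)
    (hdeg : G.degree v ≤ 7) {y : V} (hy : y ∈ C ∪ outerBoundary G C)
    {D : Finset V} (hD : IsFarComponent G v D) (hyD : y ∈ D) :
    ∃ k ∈ outerBoundary G C, k ∈ D := by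
  rcases Finset.mem_union.mp hy with hyC | hyK
  · obtain ⟨w, hyw⟩ := hC.prop.exists_adj y hyC
    have hD_frag := hD.isFragment hG.edgesInTriangles hdeg hG.not_hasMinor hyD hyw
    have hnot : ¬ D ⊆ C := fun hsub => hD.notMem (hC.le_of_le hD_frag hsub hv)
    obtain ⟨q, hqD, hqC⟩ := Finset.not_subset.mp hnot
    obtain ⟨p, ⟨-, hpC⟩, q, ⟨hqD, hqC⟩, hpq⟩ :=
        exists_adj_inter_diff_of_connected (T := (C : Set V)) hD.connected hyD hyC hqD hqC
    exact ⟨q, mem_outerBoundary.mpr ⟨hqC, p, hpC, hpq⟩, hqD⟩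
  · exact ⟨y, hyK, hyD⟩

/-- By minimality every far component that meets the fragment also meets its boundary, and the
boundary is a clique; hence a single far component suffices. -/
lemma exists_isFarComponent_of_minimal (hG : IsCritical G) (hC : Minimal (IsFragment G) C)
    (hv : v ∈ C) (hdeg : G.degree v ≤ 7) {y : V} (hy : y ∈ C ∪ outerBoundary G C) (hyv : y ≠ v)
    (hvy : ¬ G.Adj v y) : ∃ D, IsFarComponent G v D ∧ (∃ k ∈ outerBoundary G C, k ∈ D) ∧
      ∀ x ∈ C ∪ outerBoundary G C, x ≠ v → ¬ G.Adj v x → x ∈ D := by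
  obtain ⟨D, hD, hyD⟩ := exists_isFarComponent hyv hvy
  obtain ⟨k, hkK, hkD⟩ := hG.exists_mem_boundary_mem_far hC hv hdeg hy hD hyD
  refine ⟨D, hD, ⟨k, hkK, hkD⟩, fun x hx hxv hvx => ?_⟩
  obtain ⟨D', hD', hxD'⟩ := exists_isFarComponent hxv hvx
  obtain ⟨l, hlK, hlD'⟩ := hG.exists_mem_boundary_mem_far hC hv hdeg hx hD' hxD'
  have hlD : l ∈ D := by
    rcases eq_or_ne k l with rfl | hkl
    · exact hkD
    · exact hD.mem_of_adj hkD (hC.prop.isClique hkK hlK hkl) (hD'.not_adj l hlD')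
  exact hD'.subset_of_mem hD hlD' hlD hxD'

lemma eq_bot (hG : IsCritical G) : G = ⊥ := by
  by_contra hne
  obtain ⟨C, v, hC, hv, hdeg, hvmin⟩ := hG.exists_isMinimalFragment_degree_le hne
  obtain ⟨u, hvu⟩ := hC.prop.exists_adj v hv
  obtain ⟨a, a', hpair⟩ := hG.edgesInTriangles.exists_isNonadjPair hdeg hvu hG.not_hasMinor
  have hmem : ∀ {b b'}, IsNonadjPair G v b b' → b ∈ C ∨ b ∈ outerBoundary G C := fun hb =>
    Finset.mem_union.mp (mem_union_outerBoundary_of_adj hv hb.left_adj)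
  obtain ⟨y, hy, hyv, hvy⟩ : ∃ y ∈ C ∪ outerBoundary G C, y ≠ v ∧ ¬ G.Adj v y := by
    rcases hmem hpair with ha | ha
    · exact (hpair.exists_far_adj ha (hvmin a ha)).imp fun _ h => ⟨h.1, h.2.1, h.2.2.1⟩
    rcases hmem hpair.symm with ha' | ha'
    · exact (hpair.symm.exists_far_adj ha' (hvmin a' ha')).imp fun _ h => ⟨h.1, h.2.1, h.2.2.1⟩
    · exact absurd (hC.prop.isClique ha ha' hpair.ne) hpair.not_adj
  obtain ⟨D, hD, ⟨k, hkK, hkD⟩, hD_all⟩ :=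
    hG.exists_isFarComponent_of_minimal hC hv hdeg hy hyv hvy
  have hboundary : ∀ {b b'}, IsNonadjPair G v b b' → b ∈ outerBoundary G D := by
    intro b b' hb
    refine mem_outerBoundary.mpr ⟨fun hbD => hD.not_adj b hbD hb.left_adj, ?_⟩
    rcases hmem hb with hbC | hbK
    · obtain ⟨y, hy, hyv, hvy, hby⟩ := hb.exists_far_adj hbC (hvmin b hbC)
      exact ⟨y, hD_all y hy hyv hvy, hby.symm⟩
    · refine ⟨k, hkD, hC.prop.isClique hkK hbK ?_⟩
      rintro rfl
      exact hD.not_adj k hkD hb.left_adj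
  exact hpair.not_adj (hD.isClique_outerBoundary hG.edgesInTriangles hdeg hG.not_hasMinor
    (hboundary hpair) (hboundary hpair.symm) hpair.ne)

end IsCritical

end Fragments

section Conclusion

universe u

variable {V : Type u} [Fintype V] {G : SimpleGraph V}

lemma stressFree_bot {E : Type*} [AddCommGroup E] [Module ℝ E] (f : V → E) :
    StressFree ⊥ f :=
  stressFree_iff.mpr fun _ hω _ => funext₂ fun x y => hω.2 x y id

lemma card_edgeFinset_le_of_stressFree [Nonempty V]
    (h : ∃ f : V → EuclideanSpace ℝ (Fin 4), StressFree G f) :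
    G.edgeFinset.card + 4 ≤ 4 * Fintype.card V := by
  obtain ⟨f, hf⟩ := h
  simpa using hf.card_edgeFinset_add_finrank_le

lemma exists_stressFree_or_edgesInTriangles {n : ℕ} {E : Type*} [NormedAddCommGroup E]
    [NormedSpace ℝ E] [FiniteDimensional ℝ E] (hfree : ¬ HasMinor G (⊤ : SimpleGraph (Fin n)))
    (hsmaller : ∀ (W : Type u) [Fintype W], Fintype.card W < Fintype.card V →
      ∀ H : SimpleGraph W, ¬ HasMinor H (⊤ : SimpleGraph (Fin n)) →
        ∃ f : W → E, StressFree H f) :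
    (∃ f : V → E, StressFree G f) ∨ EdgesInTriangles G (Module.finrank ℝ E) := by
  refine or_iff_not_imp_right.mpr fun htri => ?_
  simp only [EdgesInTriangles, not_forall, not_le] at htri
  obtain ⟨u, v, huv, hcommon⟩ := htri
  let π : V → {x // x ≠ v} := fun x => if hx : x = v then ⟨u, huv.ne⟩ else ⟨x, hx⟩
  have hπ : ∀ x y, π x = π y ↔ x = y ∨ s(x, y) = s(u, v) := by
    intro x y
    have := huv.ne
    by_cases hx : x = v <;> by_cases hy : y = v <;> simp [π, hx, hy, Subtype.ext_iff]
    all_goals grind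
  have hsurj : Function.Surjective π := fun x => ⟨x, by simp [π, x.2]⟩
  refine exists_stressFree_of_map huv.ne hπ hcommon (hsmaller _ ?_ _ fun hmap => hfree ?_)
  · exact Fintype.card_subtype_lt (x := v) (by simp)
  · exact (hasMinor_map_of_adj huv hsurj hπ).trans hmap

lemma exists_lt_card_edgeFinset_eq (hne : G ≠ ⊥) :
    ∃ H < G, G.edgeFinset.card = H.edgeFinset.card + 1 := by
  obtain ⟨e, he⟩ := SimpleGraph.edgeSet_nonempty.mpr hne
  refine ⟨G.deleteEdges {e}, (G.deleteEdges_le {e}).lt_of_ne fun h => ?_, ?_⟩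
  · exact Set.disjoint_left.mp (G.deleteEdges_eq_self.mp h) he rfl
  · rw [← Finset.card_erase_add_one (SimpleGraph.mem_edgeFinset.mpr he)]
    congr 2
    ext x
    simp [and_comm]

lemma isCritical_of_edgesInTriangles [Nonempty V]
    (hfree : ¬ HasMinor G (⊤ : SimpleGraph (Fin 6)))
    (hinduce : ∀ S : Finset V, S ≠ Finset.univ →
      ∃ f : S → EuclideanSpace ℝ (Fin 4), StressFree (G.induce (S : Set V)) f)
    (hsub : ∀ H < G, ∃ f : V → EuclideanSpace ℝ (Fin 4), StressFree H f)
    (htri : EdgesInTriangles G 4) : IsCritical G where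
  edgesInTriangles := htri
  not_hasMinor := hfree
  card_edgeFinset_induce_le S hS hne := by
    have : Nonempty S := hS.to_subtype
    rw [← Fintype.card_coe S]
    convert card_edgeFinset_le_of_stressFree (hinduce S hne) <;> simp
  card_edgeFinset_lt := by
    rcases eq_or_ne G ⊥ with hbot | hne
    · simp [SimpleGraph.edgeFinset_eq_empty.mpr hbot, Fintype.card_pos]
    obtain ⟨H, hH, hcard⟩ := exists_lt_card_edgeFinset_eq hne
    have := card_edgeFinset_le_of_stressFree (hsub H hH)
    omega

theorem exists_stressFree_of_not_hasMinor (hfree : ¬ HasMinor G (⊤ : SimpleGraph (Fin 6))) :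
    ∃ f : V → EuclideanSpace ℝ (Fin 4), StressFree G f := by
  induction hn : Fintype.card V using Nat.strong_induction_on generalizing V with
  | _ n ihn =>
  subst hn
  have hsmaller : ∀ (W : Type u) [Fintype W], Fintype.card W < Fintype.card V →
      ∀ H : SimpleGraph W, ¬ HasMinor H (⊤ : SimpleGraph (Fin 6)) →
        ∃ f : W → EuclideanSpace ℝ (Fin 4), StressFree H f :=
    fun W _ hW H hH => ihn _ hW hH rfl
  induction G using WellFoundedLT.induction with
  | _ G ihG =>
  rcases isEmpty_or_nonempty V with hV | hV
  · exact ⟨isEmptyElim, Subsingleton.elim G ⊥ ▸ stressFree_bot _⟩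
  rcases exists_stressFree_or_edgesInTriangles hfree hsmaller with h | htri
  · exact h
  have hcritical : IsCritical G := by
    refine isCritical_of_edgesInTriangles hfree (fun S hS => ?_) (fun H hH => ?_)
      (by simpa using htri)
    · refine hsmaller _ ?_ _ (not_hasMinor_of_isContained ?_ hfree)
      · simpa using (Finset.card_lt_iff_ne_univ S).mpr hS
      · exact ⟨(SimpleGraph.Embedding.induce _).toCopy⟩
    · exact ihG H hH (not_hasMinor_of_isContained (.of_le hH.le) hfree)
  exact ⟨0, hcritical.eq_bot ▸ stressFree_bot 0⟩

end Conclusion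

/-- Every finite simple graph with no `K₆` minor (in particular, every linklessly
embeddable graph) is generically `4`-stress free. -/
theorem k6MinorFree_genericallyFourStressFree {V : Type*} [Fintype V] (G : SimpleGraph V)
    (hfree : ¬ HasMinor G (⊤ : SimpleGraph (Fin 6))) :
    GenericallyStressFree G 4 :=
  genericallyStressFree_of_exists (exists_stressFree_of_not_hasMinor hfree)
end

section
/- Let r be an integer with 3 ≤ r ≤ 5 and let G be a finite simple graph that has at least one edge and in which every edge belongs to at least r−2 triangles (i.e., the two endpoints of every edge have at least r−2 common neighbors). Then G has a K_r minor. -/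
open scoped Classical

/-!
Let `v` be a vertex with finite nonempty neighborhood `N` such that every edge at `v` lies in at
least `k` triangles. Then `G[N]` has minimum degree at least `k`, and a `K_{k+1}` minor of `G[N]`
extends by `{v}` to a `K_{k+2}` minor of `G`.

A finite graph of minimum degree `3` has a `K₄` minor. Among all longest paths `x A y D` whose
first vertex `x` is adjacent to `y`, with `A` nonempty, choose one with `A` as short as possible.
All neighbors of `x` lie on the path, and by minimality at most two of them lie in `A y`, so `x`
has a neighbor in `D`. Reversing the segment `x A` gives another such path, so the last vertex
of `A` has a neighbor in `D` too. Hence `{x}`, `A`, `{y}`, `D` are the branch sets of a `K₄`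
minor. For minimum degree `2`, the sets `{x}`, `A`, `{y}` form a `K₃` minor.
-/

section CompleteModel

variable {V V' ι : Type*} {G : SimpleGraph V} {G' : SimpleGraph V'}

/-- Two vertex sets touch if they are disjoint and joined by an edge, as two branch sets of a
complete minor must be. -/
def Touch (G : SimpleGraph V) (s t : Set V) : Prop :=
  Disjoint s t ∧ ∃ x ∈ s, ∃ y ∈ t, G.Adj x y

theorem Touch.symm {s t : Set V} : Touch G s t → Touch G t s :=
  fun ⟨hdisj, x, hx, y, hy, hxy⟩ ↦ ⟨hdisj.symm, y, hy, x, hx, hxy.symm⟩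

theorem Touch.image {s t : Set V} (f : G →g G') (hf : Function.Injective f) :
    Touch G s t → Touch G' (f '' s) (f '' t) :=
  fun ⟨hdisj, x, hx, y, hy, hxy⟩ ↦ ⟨(Set.disjoint_image_iff hf).2 hdisj, f x,
    Set.mem_image_of_mem f hx, f y, Set.mem_image_of_mem f hy, f.map_adj hxy⟩

theorem touch_singleton_of_subset_neighborSet {v : V} {s : Set V} (hne : s.Nonempty)
    (hs : s ⊆ G.neighborSet v) : Touch G {v} s := by
  obtain ⟨x, hx⟩ := hne
  exact ⟨Set.disjoint_singleton_left.2 fun hv ↦ G.irrefl (hs hv), v, rfl, x, hx, hs hx⟩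

theorem touch_singleton_of_adj {x y : V} (h : G.Adj x y) : Touch G {x} {y} :=
  touch_singleton_of_subset_neighborSet (Set.singleton_nonempty y) (Set.singleton_subset_iff.2 h)

theorem connected_induce_singleton (v : V) : (G.induce {v}).Connected := by
  rw [SimpleGraph.induce_singleton_eq_top]
  exact SimpleGraph.connected_top

theorem connected_induce_image {s : Set V} (hs : (G.induce s).Connected) (f : G →g G') :
    (G'.induce (f '' s)).Connected :=
  hs.map (SimpleGraph.induceHom f (Set.mapsTo_image f s))
    (Set.surjective_mapsTo_image_restrict f s)

/-- The family `B` consists of the branch sets of a complete minor of `G`, with one vertex for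
each index. -/
structure IsCompleteModel (G : SimpleGraph V) (B : ι → Set V) : Prop where
  connected : ∀ i, (G.induce (B i)).Connected
  touch : Pairwise fun i j ↦ Touch G (B i) (B j)

namespace IsCompleteModel

variable {B : ι → Set V}

theorem nonempty (hB : IsCompleteModel G B) (i : ι) : (B i).Nonempty :=
  Set.nonempty_coe_sort.1 (hB.connected i).nonempty

theorem image (hB : IsCompleteModel G B) (f : G →g G') (hf : Function.Injective f) :
    IsCompleteModel G' fun i ↦ f '' B i :=
  ⟨fun i ↦ connected_induce_image (hB.connected i) f, fun _ _ hij ↦ (hB.touch hij).image f hf⟩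

theorem of_isEmpty [IsEmpty ι] : IsCompleteModel G B :=
  ⟨isEmptyElim, fun i ↦ isEmptyElim i⟩

theorem cons {n : ℕ} {B : Fin n → Set V} {s : Set V} (hB : IsCompleteModel G B)
    (hs : (G.induce s).Connected) (htouch : ∀ i, Touch G s (B i)) :
    IsCompleteModel G (Matrix.vecCons s B) := by
  refine ⟨Fin.forall_fin_succ.2 ⟨hs, hB.connected⟩, ?_⟩
  exact pairwise_fin_succ_iff.2 ⟨fun i ↦ (htouch i).symm, htouch, hB.touch⟩

end IsCompleteModel

theorem hasMinor_top_iff : HasMinor G (⊤ : SimpleGraph ι) ↔ ∃ B : ι → Set V, IsCompleteModel G B :=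
  ⟨fun ⟨B, _, hdisj, hconn, hadj⟩ ↦ ⟨B, hconn, fun i j hij ↦ ⟨hdisj i j hij, hadj i j hij⟩⟩,
    fun ⟨B, hB⟩ ↦ ⟨B, hB.nonempty, fun _ _ hij ↦ (hB.touch hij).1, hB.connected,
      fun _ _ hij ↦ (hB.touch hij).2⟩⟩

theorem HasMinor.cone {v : V} {n : ℕ}
    (h : HasMinor (G.induce (G.neighborSet v)) (⊤ : SimpleGraph (Fin n))) :
    HasMinor G (⊤ : SimpleGraph (Fin (n + 1))) := by
  obtain ⟨B, hB⟩ := hasMinor_top_iff.1 h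
  have hB' := hB.image (SimpleGraph.Embedding.induce _).toHom Subtype.val_injective
  refine hasMinor_top_iff.2 ⟨_, hB'.cons (connected_induce_singleton v) fun i ↦ ?_⟩
  exact touch_singleton_of_subset_neighborSet (hB'.nonempty i) (Subtype.coe_image_subset _ _)

end CompleteModel

section LongestPath

variable {V : Type*} {G : SimpleGraph V}

/-- `l` lists the vertices of a path of `G`, in order. The empty list is allowed. -/
structure IsPathList (G : SimpleGraph V) (l : List V) : Prop where
  isChain : l.IsChain G.Adj
  nodup : l.Nodup

/-- `l` lists the vertices of a path of `G` of maximum length. -/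
abbrev IsLongestPath (G : SimpleGraph V) (l : List V) : Prop :=
  MaximalFor (IsPathList G) List.length l

variable {x z : V} {l l₁ l₂ : List V}

theorem IsPathList.of_infix (h : IsPathList G l₂) (hl : l₁ <:+: l₂) : IsPathList G l₁ :=
  ⟨h.isChain.infix hl, h.nodup.sublist hl.sublist⟩

theorem connected_induce_of_isChain (hl : l.IsChain G.Adj) (hne : l ≠ []) :
    (G.induce {v | v ∈ l}).Connected := by
  have hconn := (SimpleGraph.Walk.ofSupport l hne hl).connected_induce_support
  rwa [SimpleGraph.Walk.support_ofSupport] at hconn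

theorem disjoint_of_nodup_append (h : (l₁ ++ l₂).Nodup) :
    Disjoint {v | v ∈ l₁} {v | v ∈ l₂} :=
  Set.disjoint_left.2 fun _ h₁ h₂ ↦ List.disjoint_of_nodup_append h h₁ h₂

theorem IsPathList.touch_of_infix (h : IsPathList G l) (hl : l₁ ++ l₂ <:+: l) (h₁ : l₁ ≠ [])
    (h₂ : l₂ ≠ []) : Touch G {v | v ∈ l₁} {v | v ∈ l₂} := by
  obtain ⟨hchain, hnodup⟩ := h.of_infix hl
  have hjoin := (List.isChain_append.1 hchain).2.2
  exact ⟨disjoint_of_nodup_append hnodup, l₁.getLast h₁, List.getLast_mem h₁, l₂.head h₂,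
    List.head_mem h₂, hjoin _ (List.getLast_mem_getLast? h₁) _ (List.head_mem_head? h₂)⟩

theorem exists_isLongestPath [Finite V] (G : SimpleGraph V) : ∃ l, IsLongestPath G l := by
  have := Fintype.ofFinite V
  have hfin : {l | IsPathList G l}.Finite :=
    (Set.finite_coe_iff.1 (Finite.of_fintype {l : List V // l.Nodup})).subset fun _ hl ↦ hl.nodup
  exact hfin.exists_maximalFor List.length _ ⟨[], .nil, .nil⟩

theorem IsLongestPath.ne_nil [Nonempty V] (h : IsLongestPath G l) : l ≠ [] := by
  rintro rfl
  obtain ⟨v⟩ := ‹Nonempty V›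
  simpa using h.le_of_le ⟨.singleton v, List.nodup_singleton v⟩ (Nat.zero_le _)

theorem IsLongestPath.mem_of_adj (h : IsLongestPath G (x :: l)) (hxz : G.Adj x z) : z ∈ l := by
  by_contra hz
  have hpath : IsPathList G (z :: x :: l) :=
    ⟨h.prop.isChain.cons_cons hxz.symm, h.prop.nodup.cons (by simp [hz, hxz.ne'])⟩
  simpa using h.le_of_le hpath (by simp)

theorem exists_adj_notMem_of_length_lt_degree [Fintype (G.neighborSet x)]
    (h : l.length < G.degree x) : ∃ z, G.Adj x z ∧ z ∉ l := by
  obtain ⟨z, hxz, hz⟩ :=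
    Finset.exists_mem_notMem_of_card_lt_card (l.toFinset_card_le.trans_lt h)
  exact ⟨z, (G.mem_neighborFinset x z).1 hxz, by simpa using hz⟩

end LongestPath

section MinDegree

variable {V : Type*} {G : SimpleGraph V}

/-- `C ++ y :: D` is a longest path of `G` whose first vertex is adjacent to `y`, so that the
vertices of `C` followed by `y` form a cycle. -/
structure IsLongestLasso (G : SimpleGraph V) (C : List V) (y : V) (D : List V) : Prop where
  isLongestPath : IsLongestPath G (C ++ y :: D)
  adj_of_mem_head? : ∀ x ∈ C.head?, G.Adj x y
  one_lt_length : 1 < C.length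

/-- A longest lasso whose cycle is as short as possible. -/
structure IsTightLasso (G : SimpleGraph V) (C : List V) (y : V) (D : List V) : Prop
    extends IsLongestLasso G C y D where
  length_le : ∀ ⦃C' y' D'⦄, IsLongestLasso G C' y' D' → C.length ≤ C'.length

variable {x y : V} {A C D : List V}

theorem exists_isLongestLasso [Fintype V] [DecidableRel G.Adj] (hG : 2 ≤ G.minDegree) :
    ∃ C y D, IsLongestLasso G C y D := by
  have : Nonempty V := by
    by_contra hV
    have := not_nonempty_iff.1 hV
    simp [SimpleGraph.minDegree_of_subsingleton] at hG
  obtain ⟨l, hl⟩ := exists_isLongestPath G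
  obtain ⟨x, t, rfl⟩ := List.exists_cons_of_ne_nil hl.ne_nil
  obtain ⟨z, hxz, hz⟩ : ∃ z, G.Adj x z ∧ z ∉ t.take 1 :=
    exists_adj_notMem_of_length_lt_degree <|
      (t.length_take_le 1).trans_lt (hG.trans (G.minDegree_le_degree x))
  obtain ⟨A, D, rfl⟩ := List.append_of_mem (hl.mem_of_adj hxz)
  have hA : A ≠ [] := by
    rintro rfl
    simp at hz
  exact ⟨x :: A, z, D, hl, by simpa using hxz, by simpa [List.length_pos_iff] using hA⟩

theorem exists_isTightLasso [Fintype V] [DecidableRel G.Adj] (hG : 2 ≤ G.minDegree) :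
    ∃ C y D, IsTightLasso G C y D := by
  obtain ⟨C, y, D, h⟩ := exists_isLongestLasso hG
  obtain ⟨⟨C, y, D⟩, h, hmin⟩ := exists_minimalFor_of_wellFoundedLT
    (fun p : List V × V × List V ↦ IsLongestLasso G p.1 p.2.1 p.2.2) (·.1.length) ⟨(C, y, D), h⟩
  exact ⟨C, y, D, h, fun C' y' D' h' ↦ (le_total _ _).elim id (hmin (j := (C', y', D')) h')⟩

theorem IsLongestLasso.reverse (h : IsLongestLasso G C y D) :
    IsLongestLasso G C.reverse y D := by
  have hperm : (C.reverse ++ y :: D).Perm (C ++ y :: D) := C.reverse_perm.append_right _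
  obtain ⟨hC, hD, hjoin⟩ := List.isChain_append.1 h.isLongestPath.prop.isChain
  have hpath : IsPathList G (C.reverse ++ y :: D) := by
    refine ⟨List.isChain_append.2 ⟨?_, hD, ?_⟩, hperm.nodup_iff.2 h.isLongestPath.prop.nodup⟩
    · exact List.isChain_reverse.2 (hC.imp fun _ _ hadj ↦ hadj.symm)
    · simpa using h.adj_of_mem_head?
  refine ⟨⟨hpath, fun l hl _ ↦ ?_⟩, by simpa using hjoin, by simpa using h.one_lt_length⟩
  rw [hperm.length_eq]
  exact (le_total _ _).elim id (h.isLongestPath.le_of_le hl)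

theorem IsTightLasso.reverse (h : IsTightLasso G C y D) : IsTightLasso G C.reverse y D :=
  ⟨h.toIsLongestLasso.reverse, by simpa using h.length_le⟩

theorem IsTightLasso.exists_adj_mem [Fintype (G.neighborSet x)]
    (h : IsTightLasso G (x :: A) y D) (hx : 3 ≤ G.degree x) : ∃ d ∈ D, G.Adj x d := by
  obtain ⟨z, hxz, hz⟩ : ∃ z, G.Adj x z ∧ z ∉ y :: A.take 1 :=
    exists_adj_notMem_of_length_lt_degree (by grind)
  have hzy : z ≠ y := by grind
  have hzA : z ∉ A := by
    intro hzA
    obtain ⟨A₁, A₂, rfl⟩ := List.append_of_mem hzA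
    have hA₁ : A₁ ≠ [] := by
      rintro rfl
      simp at hz
    have hshort : IsLongestLasso G (x :: A₁) z (A₂ ++ y :: D) :=
      ⟨by simpa using h.isLongestPath, by simpa using hxz,
        by simpa [List.length_pos_iff] using hA₁⟩
    simpa using h.length_le hshort
  have hmem : z ∈ A ++ y :: D := h.isLongestPath.mem_of_adj hxz
  exact ⟨z, by simpa [hzA, hzy] using hmem, hxz⟩

theorem IsLongestLasso.isCompleteModel (h : IsLongestLasso G (x :: A) y D) :
    IsCompleteModel G ![{x}, {v | v ∈ A}, {y}] := by
  have hA : A ≠ [] := by simpa [List.length_pos_iff] using h.one_lt_length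
  have hpath := h.isLongestPath.prop
  have hxA : Touch G {x} {v | v ∈ A} := by
    simpa using hpath.touch_of_infix (l₁ := [x]) ⟨[], y :: D, by simp⟩ (by simp) hA
  have hAy : Touch G {v | v ∈ A} {y} := by
    simpa using hpath.touch_of_infix (l₂ := [y]) ⟨[x], D, by simp⟩ hA (by simp)
  have hxy : Touch G {x} {y} := touch_singleton_of_adj (h.adj_of_mem_head? x rfl)
  have hconn := connected_induce_of_isChain (hpath.isChain.infix ⟨[x], y :: D, by simp⟩) hA
  refine .cons (.cons (.cons .of_isEmpty (connected_induce_singleton y) ?_) hconn ?_)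
    (connected_induce_singleton x) ?_
  · exact isEmptyElim
  · simpa using hAy
  · simpa [Fin.forall_fin_two] using ⟨hxA, hxy⟩

theorem IsTightLasso.isCompleteModel [Fintype V] [DecidableRel G.Adj]
    (h : IsTightLasso G (x :: A) y D) (hG : 3 ≤ G.minDegree) :
    IsCompleteModel G ![{v | v ∈ D}, {x}, {v | v ∈ A}, {y}] := by
  have hdeg : ∀ v, 3 ≤ G.degree v := fun v ↦ hG.trans (G.minDegree_le_degree v)
  have hA : A ≠ [] := by simpa [List.length_pos_iff] using h.one_lt_length
  obtain ⟨d, hd, hxd⟩ := h.exists_adj_mem (hdeg x)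
  obtain ⟨B, a, hBa⟩ := A.eq_nil_or_concat'.resolve_left hA
  have hrev : IsTightLasso G (a :: (x :: B).reverse) y D := by simpa [hBa] using h.reverse
  obtain ⟨e, he, hae⟩ := hrev.exists_adj_mem (hdeg a)
  have hD : D ≠ [] := List.ne_nil_of_mem hd
  have hpath := h.isLongestPath.prop
  have hyD : Touch G {y} {v | v ∈ D} := by
    simpa using hpath.touch_of_infix (l₁ := [y]) ⟨x :: A, [], by simp⟩ (by simp) hD
  have hdisj : Disjoint {v | v ∈ x :: A} {v | v ∈ D} :=
    disjoint_of_nodup_append (hpath.nodup.sublist (by simp))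
  have hxD : Touch G {x} {v | v ∈ D} := ⟨hdisj.mono_left (by simp), x, rfl, d, hd, hxd⟩
  have hAD : Touch G {v | v ∈ A} {v | v ∈ D} :=
    ⟨hdisj.mono_left fun v ↦ List.mem_cons_of_mem x, a, by simp [hBa], e, he, hae⟩
  have hconn := connected_induce_of_isChain (hpath.isChain.infix ⟨x :: A ++ [y], [], by simp⟩) hD
  refine h.toIsLongestLasso.isCompleteModel.cons hconn ?_
  simpa [Fin.forall_fin_succ] using ⟨hxD.symm, hAD.symm, hyD.symm⟩

theorem hasMinor_top_of_le_minDegree [Fintype V] [Nonempty V] [DecidableRel G.Adj] {k : ℕ}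
    (hk : k ≤ 3) (hG : k ≤ G.minDegree) : HasMinor G (⊤ : SimpleGraph (Fin (k + 1))) := by
  obtain ⟨x⟩ := ‹Nonempty V›
  have singleton_model (v : V) : IsCompleteModel G ![{v}] :=
    IsCompleteModel.of_isEmpty.cons (connected_induce_singleton v) isEmptyElim
  rw [hasMinor_top_iff]
  interval_cases k
  · exact ⟨_, singleton_model x⟩
  · obtain ⟨y, hxy⟩ := (G.degree_pos_iff_exists_adj x).1 (hG.trans (G.minDegree_le_degree x))
    refine ⟨_, (singleton_model y).cons (connected_induce_singleton x) fun i ↦ ?_⟩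
    simpa using touch_singleton_of_adj hxy
  · obtain ⟨C, y, D, h⟩ := exists_isLongestLasso hG
    obtain ⟨x, A, rfl⟩ := List.exists_cons_of_length_pos (zero_lt_one.trans h.one_lt_length)
    exact ⟨_, h.isCompleteModel⟩
  · obtain ⟨C, y, D, h⟩ := exists_isTightLasso (Nat.le_of_succ_le hG)
    obtain ⟨x, A, rfl⟩ := List.exists_cons_of_length_pos (zero_lt_one.trans h.one_lt_length)
    exact ⟨_, h.isCompleteModel hG⟩

end MinDegree

theorem degree_induce_eq_ncard {V : Type*} {G : SimpleGraph V} (s : Set V) (x : s)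
    [Fintype ((G.induce s).neighborSet x)] :
    (G.induce s).degree x = (s ∩ G.neighborSet x).ncard := by
  have himage : Subtype.val '' (G.induce s).neighborSet x = s ∩ G.neighborSet x :=
    Subtype.image_preimage_coe s (G.neighborSet x)
  rw [← himage, Set.ncard_image_of_injective _ Subtype.val_injective, ← Nat.card_coe_set_eq,
    Nat.card_eq_fintype_card, SimpleGraph.card_neighborSet_eq_degree]

theorem hasKrMinor_of_edges_in_triangles_general {V : Type*} (G : SimpleGraph V) {v : V}
    (hfin : (G.neighborSet v).Finite) (hne : (G.neighborSet v).Nonempty) {k : ℕ} (hk : k ≤ 3)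
    (htri : ∀ u, G.Adj v u → k ≤ (G.neighborSet v ∩ G.neighborSet u).ncard) :
    HasMinor G (⊤ : SimpleGraph (Fin (k + 2))) := by
  have := hfin.fintype
  have := hne.to_subtype
  have hdeg : k ≤ (G.induce (G.neighborSet v)).minDegree := by
    refine SimpleGraph.le_minDegree_of_forall_le_degree _ _ fun u ↦ ?_
    rw [degree_induce_eq_ncard]
    exact htri u u.2
  exact (hasMinor_top_of_le_minDegree hk hdeg).cone

/-- For `3 ≤ r ≤ 5`: if `G` has an edge and every edge of `G` belongs to at least
`r - 2` triangles (i.e. the endpoints of every edge have at least `r - 2` common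
neighbors), then `G` has a `K_r` minor. -/
theorem hasKrMinor_of_edges_in_triangles {V : Type*} [Fintype V] (G : SimpleGraph V)
    (r : ℕ) (hr3 : 3 ≤ r) (hr5 : r ≤ 5)
    (hedge : G.edgeSet.Nonempty)
    (htri : ∀ v u : V, G.Adj v u → r - 2 ≤ (G.neighborSet v ∩ G.neighborSet u).ncard) :
    HasMinor G (⊤ : SimpleGraph (Fin r)) := by
  obtain ⟨k, rfl⟩ := Nat.exists_eq_add_of_le' (show 2 ≤ r by lia)
  obtain ⟨v, u, hvu⟩ := SimpleGraph.ne_bot_iff_exists_adj.1 (SimpleGraph.edgeSet_nonempty.1 hedge)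
  exact hasKrMinor_of_edges_in_triangles_general G (Set.toFinite _) ⟨u, hvu⟩ (by lia) (htri v)
end
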